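/- Let s : X^ℤ → X^ℤ be the time shift defined by (sw)(n) = w(n+1), extended to X^ℤ × Ξ by s(w,ξ) = (sw,ξ). Then for every set A in the product σ-algebra on X^ℤ × Ξ that is invariant under the diagonal action of the isometries of X, one has P̂_0[sA] = P̂_0[A]. -/

import Mathlib

open MeasureTheory Metric Set Bornology Function
open scoped ENNReal NNReal unitInterval

noncomputable section

namespace BooleanModel

/-- The space of simple, locally finite point configurations on a metric space `X`
(realizations of simple counting measures on `X`). -/
def Config (X : Type*) [MetricSpace X] : Type _ :=
  {s : Set X // ∀ K : Set X, IsBounded K → (s ∩ K).Finite}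

namespace Config

variable {X : Type*} [MetricSpace X]

/-- The σ-algebra on `Config X` generated by the evaluation (counting) maps `ω ↦ ω(B)`. -/
instance instMeasurableSpace [MeasurableSpace X] : MeasurableSpace (Config X) :=
  MeasurableSpace.generateFrom
    {A | ∃ (B : Set X) (n : ℕ∞), MeasurableSet B ∧ A = {s : Config X | (s.1 ∩ B).encard = n}}

/-- The number of points of the configuration `s` lying in `B`. -/
def count (B : Set X) (s : Config X) : ℕ∞ := (s.1 ∩ B).encard

/-- Adding a point to a configuration (`ω + δ_y`). -/
def insertPt (y : X) (s : Config X) : Config X :=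
  ⟨insert y s.1, by
    intro K hK
    refine ((s.2 K hK).insert y).subset ?_
    rintro z ⟨hz1, hz2⟩
    rcases Set.mem_insert_iff.1 hz1 with rfl | h
    · exact Set.mem_insert _ _
    · exact Set.mem_insert_of_mem _ ⟨h, hz2⟩⟩

/-- The restriction `ω|_{B^c}` of a configuration to the complement of `B`. -/
def restrict (B : Set X) (s : Config X) : Config X :=
  ⟨s.1 ∩ Bᶜ, fun K hK => (s.2 K hK).subset fun z hz => ⟨hz.1.1, hz.2⟩⟩

/-- Push-forward of a configuration under an isometry of `X`. -/
def mapIso (γ : X ≃ᵢ X) (s : Config X) : Config X :=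
  ⟨⇑γ '' s.1, by
    intro K hK
    have h1 : ⇑γ ⁻¹' K = ⇑γ.symm '' K := by
      ext z
      constructor
      · intro hz; exact ⟨γ z, hz, γ.symm_apply_apply z⟩
      · rintro ⟨w, hw, rfl⟩; simpa using hw
    have h2 : ⇑γ '' s.1 ∩ K = ⇑γ '' (s.1 ∩ ⇑γ ⁻¹' K) := (Set.image_inter_preimage _ _ _).symm
    rw [h2]
    refine (s.2 _ ?_).image _
    rw [h1]
    exact γ.symm.isometry.lipschitz.isBounded_image hK⟩

end Config

section BasicDefs

variable {X : Type*} [MetricSpace X]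

/-- The occupied set of the Boolean model with unit radii driven by `s`. -/
def occupied (s : Config X) : Set X := ⋃ x ∈ s.1, closedBall x 1

/-- The vacant set of the Boolean model with unit radii driven by `s`. -/
def vacant (s : Config X) : Set X := (occupied s)ᶜ

/-- The collection of connected components of a set `S ⊆ X`. -/
def comps (S : Set X) : Set (Set X) := {C | ∃ x ∈ S, C = connectedComponentIn S x}

/-- The collection of unbounded connected components of `S`. -/
def ucomps (S : Set X) : Set (Set X) := {C | C ∈ comps S ∧ ¬IsBounded C}

/-- The number of connected components of `S`. -/
def numComps (S : Set X) : ℕ∞ := (comps S).encard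

/-- `N_S`: the number of unbounded connected components of `S`. -/
def numUcomps (S : Set X) : ℕ∞ := (ucomps S).encard

/-- A metric space is point-symmetric (the metric counterpart of being a Riemannian
symmetric space) if every point `x` admits a geodesic-reversing isometry fixing `x`,
i.e. an isometric point reflection around `x`. -/
def PointSymmetric (X : Type*) [MetricSpace X] : Prop :=
  ∀ x : X, ∃ invol : X ≃ᵢ X, invol x = x ∧ ∀ y : X, dist y (invol y) = 2 * dist x y

/-- The local connected component `C_S(y,r)`. -/
def localComp (S : Set X) (y : X) (r : ℝ) : Set X :=
  connectedComponentIn (S ∩ closedBall y r) y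

end BasicDefs

section MeasureDefs

variable {X : Type*} [MetricSpace X] [MeasurableSpace X]

/-- A measure on `Config X` is isometry invariant if it is preserved by the push-forward
action of every isometry of `X`. -/
def IsoInvariant (P : Measure (Config X)) : Prop :=
  ∀ γ : X ≃ᵢ X, Measure.map (Config.mapIso γ) P = P

/-- Every isometry-invariant event has probability `0` or `1`. -/
def ErgodicIso (P : Measure (Config X)) : Prop :=
  ∀ E : Set (Config X), MeasurableSet E →
    (∀ γ : X ≃ᵢ X, Config.mapIso γ ⁻¹' E = E) → P E = 0 ∨ P E = 1

/-- `P` is insertion-tolerant: for every Borel `B` with `0 < μ B < ∞`, the law of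
`ω + δ_Y` with `Y` uniform in `B` independent of `ω` is absolutely continuous w.r.t. `P`. -/
def InsertionTolerant (μ : Measure X) (P : Measure (Config X)) : Prop :=
  ∀ B : Set X, MeasurableSet B → 0 < μ B → μ B < ⊤ →
    Measure.map (fun p : Config X × X => Config.insertPt p.2 p.1)
      (P.prod ((μ B)⁻¹ • μ.restrict B)) ≪ P

/-- `P` is deletion-tolerant: for every Borel `B` with `0 < μ B < ∞`, the law of
`ω|_{B^c}` is absolutely continuous w.r.t. `P`. -/
def DeletionTolerant (μ : Measure X) (P : Measure (Config X)) : Prop :=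
  ∀ B : Set X, MeasurableSet B → 0 < μ B → μ B < ⊤ →
    Measure.map (Config.restrict B) P ≪ P

/-- `P` is the law of the Poisson point measure on `X` with intensity `ν`:
counts in disjoint Borel sets are independent with the correct Poisson distributions. -/
def IsPoisson (ν : Measure X) (P : Measure (Config X)) : Prop :=
  IsProbabilityMeasure P ∧
  (∀ B : Set X, MeasurableSet B → ν B < ⊤ → ∀ k : ℕ,
      P {s : Config X | Config.count B s = k} =
        ENNReal.ofReal (Real.exp (-(ν B).toReal) * (ν B).toReal ^ k / (Nat.factorial k))) ∧
  (∀ B : Set X, MeasurableSet B → ν B = ⊤ → P {s : Config X | (s.1 ∩ B).Infinite} = 1) ∧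
  (∀ (n : ℕ) (B : Fin n → Set X) (k : Fin n → ℕ),
      (∀ i, MeasurableSet (B i)) → (Pairwise fun i j => Disjoint (B i) (B j)) →
      P {s : Config X | ∀ i, Config.count (B i) s = k i} =
        ∏ i, P {s : Config X | Config.count (B i) s = k i})

end MeasureDefs

section PathDefs

variable {X : Type*} [MetricSpace X]

/-- The intrinsic distance between `x` and `y` within the set `S`: the infimum of the lengths
of continuous paths from `x` to `y` whose range is contained in `S`. -/
def pathDistIn (S : Set X) (x y : X) : ℝ≥0∞ :=
  ⨅ (γ : Path x y) (_ : Set.range ⇑γ ⊆ S), eVariationOn ⇑γ Set.univ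

/-- Intrinsic distance within `S` between two subsets `A` and `B`. -/
def setDistIn (S A B : Set X) : ℝ≥0∞ :=
  ⨅ (a : X) (_ : a ∈ A) (b : X) (_ : b ∈ B), pathDistIn S a b

/-- `y` is an `r`-trifurcation (marked by a point of `Y`) for the set `S`. -/
def IsTrifurcation (S : Set X) (Y : Set X) (r : ℝ) (y : X) : Prop :=
  y ∈ Y ∧ closedBall y 1 ⊆ S ∧ (∀ y' ∈ Y, y' ≠ y → 2 * r < dist y y') ∧
    3 ≤ numUcomps (connectedComponentIn S y \ localComp S y r)

end PathDefs

end BooleanModel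
namespace BooleanModel

section RandomWalk

open scoped Classical

variable {X : Type*} [MetricSpace X]

/-- The vertex set of the graph represented by the symmetric configuration `g` on `X²`. -/
def gVertices (g : Config (X × X)) : Set X := {x | ∃ y, (x, y) ∈ g.1}

/-- `c_G(x) = d_G(x) + 1`, the degree of `x` plus one. -/
def gC (g : Config (X × X)) (x : X) : ℝ≥0∞ := ({y | (x, y) ∈ g.1}.encard : ℝ≥0∞) + 1

/-- The transition probabilities `p_G` of the lazy simple random walk on `G`. -/
def gP (g : Config (X × X)) (x y : X) : ℝ≥0∞ :=
  if (x, y) ∈ g.1 ∨ (x = y ∧ x ∈ gVertices g) then (gC g x)⁻¹ else 0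

/-- The normalizing constant `Z = 𝔼[Σ_{x₀ ∈ V_G ∩ B(o,1)} c_G(x₀)]`. -/
def walkNorm {Ξ : Type*} [MeasurableSpace Ξ] (ℙ : Measure Ξ) (G : Ξ → Config (X × X))
    (o : X) : ℝ≥0∞ :=
  ∫⁻ ξ, ∑' x : X, Set.indicator (gVertices (G ξ) ∩ closedBall o 1) (gC (G ξ)) x ∂ℙ

/-- The weight `c_G(x₀) Π_{i=1}^k p_G(x_{i-1},x_i) Π_{i=-1}^{-k} p_G(x_{i+1},x_i)` of a
trajectory `(x_{-k},…,x_k)`, encoded as `f : Fin (2k+1) → X` with `f j = x_{j-k}`. -/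
def walkWeight (g : Config (X × X)) (k : ℕ) (f : Fin (2 * k + 1) → X) : ℝ≥0∞ :=
  gC g (f ⟨k, by omega⟩) *
    (∏ j : Fin k, gP g (f ⟨k + (j : ℕ), by have := j.isLt; omega⟩)
      (f ⟨k + (j : ℕ) + 1, by have := j.isLt; omega⟩)) *
    (∏ j : Fin k, gP g (f ⟨k - (j : ℕ), by have := j.isLt; omega⟩)
      (f ⟨k - (j : ℕ) - 1, by have := j.isLt; omega⟩))

end RandomWalk

section Reflections

variable {X : Type*} [MetricSpace X]

/-- `s` is a point reflection around `x`. -/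
def IsRefl (s : X ≃ᵢ X) (x : X) : Prop := ∀ y, dist y (s y) = 2 * dist x y

theorem IsRefl.fix {s : X ≃ᵢ X} {x : X} (h : IsRefl s x) : s x = x := by
  have := h x
  rw [dist_self, mul_zero, dist_eq_zero] at this
  exact this.symm

theorem IsRefl.conj {s : X ≃ᵢ X} {x : X} (h : IsRefl s x) (g : X ≃ᵢ X) :
    IsRefl (g * s * g⁻¹) (g x) := by
  intro y
  have h1 := h (g⁻¹ y)
  have h2 : g (g⁻¹ y) = y := g.apply_symm_apply y
  rw [← g.dist_eq (g⁻¹ y), ← g.dist_eq x, h2] at h1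
  exact h1

theorem IsRefl.inv {s : X ≃ᵢ X} {x : X} (h : IsRefl s x) : IsRefl s⁻¹ x := by
  intro y
  have h2 : s (s⁻¹ y) = y := s.apply_symm_apply y
  rw [← h y, ← s.dist_eq y, h2, dist_comm]

theorem IsRefl.lower {s : X ≃ᵢ X} {x : X} (h : IsRefl s x) (a b : X) :
    2 * dist a x - dist a b ≤ dist a (s b) := by
  have h1 := h a
  have h2 := dist_triangle a (s b) (s a)
  rw [s.dist_eq, h1, dist_comm x a, dist_comm b a] at h2
  linarith

theorem refl_translation {s s' : X ≃ᵢ X} {x y : X} (h : IsRefl s x) (h' : IsRefl s' y) (m : ℕ) :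
    dist x (((s' * s⁻¹) ^ m) x) + dist x y ≤ dist x (((s' * s⁻¹) ^ m) y) ∧
    dist x (((s' * s⁻¹) ^ m) y) + dist x y ≤ dist x (((s' * s⁻¹) ^ (m + 1)) x) ∧
    2 * m * dist x y ≤ dist x (((s' * s⁻¹) ^ m) x) := by
  have hsx : s⁻¹ x = x := h.inv.fix
  have hsy : s'⁻¹ y = y := h'.inv.fix
  set w := s' * s⁻¹ with hw
  have hwx : w x = s' x := by
    rw [hw, IsometryEquiv.mul_apply, hsx]
  have A : ∀ m : ℕ, 2 * dist x ((w ^ m) y) - dist x ((w ^ m) x) ≤ dist x ((w ^ (m + 1)) x) := by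
    intro m
    have h1 := (h'.conj (w ^ m)).lower x ((w ^ m) x)
    have h2 : (w ^ m * s' * (w ^ m)⁻¹) ((w ^ m) x) = (w ^ (m + 1)) x := by
      rw [← IsometryEquiv.mul_apply, inv_mul_cancel_right, pow_succ, IsometryEquiv.mul_apply,
        IsometryEquiv.mul_apply, hwx]
    rwa [h2] at h1
  have B : ∀ m : ℕ, 2 * dist x ((w ^ (m + 1)) x) - dist x ((w ^ m) y)
      ≤ dist x ((w ^ (m + 1)) y) := by
    intro m
    have h1 := ((h.inv.conj s').conj (w ^ m)).lower x ((w ^ m) y)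
    have h2 : (w ^ m * (s' * s⁻¹ * s'⁻¹) * (w ^ m)⁻¹) ((w ^ m) y) = (w ^ (m + 1)) y := by
      rw [← IsometryEquiv.mul_apply, inv_mul_cancel_right, pow_succ, IsometryEquiv.mul_apply,
        IsometryEquiv.mul_apply, IsometryEquiv.mul_apply, hsy]
      rfl
    have h3 : (w ^ m) (s' x) = (w ^ (m + 1)) x := by
      rw [pow_succ, IsometryEquiv.mul_apply, hwx]
    rwa [h2, h3] at h1
  induction m with
  | zero =>
    have := A 0
    simp only [pow_zero, IsometryEquiv.coe_one, id, dist_self] at this ⊢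
    refine ⟨by linarith, by linarith, by simp⟩
  | succ m ih =>
    have a := A (m + 1)
    have b := B m
    obtain ⟨i1, i2, i3⟩ := ih
    refine ⟨by linarith, by linarith, ?_⟩
    push_cast
    linarith

/-- Two reflections move every point at least twice as far apart as their centres. -/
theorem refl_expand {s s' : X ≃ᵢ X} {x y : X} (h : IsRefl s x) (h' : IsRefl s' y) (a : X) :
    2 * dist x y ≤ dist (s a) (s' a) := by
  set w := s' * s⁻¹ with hw
  set p := s a with hp
  have hwp : w p = s' a := by
    rw [hw, hp, ← IsometryEquiv.mul_apply, inv_mul_cancel_right]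
  have h1 : ∀ m : ℕ, dist p ((w ^ m) p) ≤ m * dist p (w p) := by
    intro m
    induction m with
    | zero => simp
    | succ m ih =>
      have := dist_triangle p ((w ^ m) p) ((w ^ (m + 1)) p)
      rw [pow_succ, IsometryEquiv.mul_apply, (w ^ m).dist_eq] at this
      rw [pow_succ, IsometryEquiv.mul_apply]
      push_cast
      linarith
  have h2 : ∀ m : ℕ, m * (2 * dist x y - dist p (w p)) ≤ 2 * dist x p := by
    intro m
    have a := (refl_translation h h' m).2.2
    have b := dist_triangle4 x p ((w ^ m) p) ((w ^ m) x)
    rw [(w ^ m).dist_eq, dist_comm p x] at b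
    have := h1 m
    linarith
  rw [← hwp]
  by_contra hc
  push Not at hc
  obtain ⟨m, hm⟩ := exists_nat_gt (2 * dist x p / (2 * dist x y - dist p (w p)))
  rw [div_lt_iff₀ (by linarith)] at hm
  linarith [h2 m]

end Reflections

section DenseOrbits

variable {X : Type*} [MetricSpace X]

theorem separated_card_bound [ProperSpace X] (a : X) (ρ : ℝ) (hρ : 0 < ρ) :
    ∃ N : ℕ, ∀ S : Finset X, (∀ q ∈ S, dist q a ≤ 2 * ρ) →
      (∀ p ∈ S, ∀ q ∈ S, p ≠ q → ρ ≤ dist p q) → S.card ≤ N := by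
  obtain ⟨t, -, htf, ht⟩ := (isCompact_closedBall a (2 * ρ)).finite_cover_balls (half_pos hρ)
  refine ⟨htf.toFinset.card, fun S hS hsep => ?_⟩
  have h1 : ∀ q ∈ S, ∃ c ∈ t, dist q c < ρ / 2 := by
    intro q hq
    have := ht (mem_closedBall.2 (hS q hq))
    simpa using this
  choose! c hc hqc using h1
  refine Finset.card_le_card_of_injOn c (fun q hq => by simpa using hc q hq) ?_
  intro p hp q hq hpq
  by_contra hne
  have h2 := hsep p hp q hq hne
  have h3 := hqc p hp
  have h4 := hqc q hq
  rw [← hpq] at h4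
  have h5 := dist_triangle_right p q (c p)
  linarith

theorem dense_orbit [ProperSpace X] [PreconnectedSpace X] (hsym : PointSymmetric X)
    (U : Subgroup (X ≃ᵢ X)) (hU : ∀ s x, IsRefl s x → s ∈ U) (a z : X) (ε : ℝ) (hε : 0 < ε) :
    ∃ u ∈ U, dist (u a) z < ε := by
  classical
  set O : Set X := (fun u : X ≃ᵢ X => u a) '' (U : Set (X ≃ᵢ X)) with hO
  have haO : a ∈ O := ⟨1, U.one_mem, rfl⟩
  have hOne : O.Nonempty := ⟨a, haO⟩
  by_cases h0 : infDist z O < ε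
  · obtain ⟨y, ⟨u, hu, rfl⟩, hy⟩ := (infDist_lt_iff hOne).1 h0
    exact ⟨u, hu, by rwa [dist_comm]⟩
  exfalso
  push Not at h0
  set t := infDist z O with ht
  have htpos : 0 < t := hε.trans_le h0
  have hval : ∀ r, 0 < r → r ≤ t → ∃ y, infDist y O = r := by
    intro r hr hrt
    have hcont : Continuous fun y => infDist y O := continuous_infDist_pt O
    exact mem_range_of_exists_le_of_exists_ge hcont
      ⟨a, by rw [infDist_zero_of_mem haO]; exact hr.le⟩ ⟨z, hrt⟩
  choose s hsfix hs using hsym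
  have key : ∀ n : ℕ, ∀ ρ : ℝ, 0 < ρ → ρ ≤ t → ∃ S : Finset X, (∀ q ∈ S, dist q a ≤ 2 * ρ) ∧
      (∀ p ∈ S, ∀ q ∈ S, p ≠ q → ρ ≤ dist p q) ∧ n ≤ S.card := by
    intro n
    induction n with
    | zero => intro ρ _ _; exact ⟨∅, by simp, by simp, by simp⟩
    | succ n ih =>
      intro ρ hρ hρt
      obtain ⟨S, hS1, hS2, hS3⟩ := ih (ρ / 2) (by linarith) (by linarith)
      obtain ⟨y, hy⟩ := hval ρ hρ hρt
      have : infDist y O < 2 * ρ := by linarith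
      obtain ⟨y', ⟨u, hu, rfl⟩, hyu⟩ := (infDist_lt_iff hOne).1 this
      have hsep : ∀ p ∈ S, ∀ q ∈ S, p ≠ q → ρ ≤ dist (s p a) (s q a) := by
        intro p hp q hq hpq
        have h1 := refl_expand (s := s p) (s' := s q) (hs p) (hs q) a
        have h2 := hS2 p hp q hq hpq
        linarith
      have hnew : ∀ v ∈ U, ρ ≤ dist (u⁻¹ y) (v a) := by
        intro v hv
        have h1 : u (u⁻¹ y) = y := u.apply_symm_apply y
        rw [← u.dist_eq, h1, ← IsometryEquiv.mul_apply, ← hy]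
        exact infDist_le_dist_of_mem ⟨u * v, U.mul_mem hu hv, rfl⟩
      have hinj : Set.InjOn (fun q => s q a) (S : Set X) := by
        intro p hp q hq hpq
        by_contra hne
        have := hsep p hp q hq hne
        simp only at hpq
        rw [hpq, dist_self] at this
        linarith
      have hsU : ∀ q, s q ∈ U := fun q => hU _ q (hs q)
      have hnotin : u⁻¹ y ∉ S.image (fun q => s q a) := by
        intro hmem
        obtain ⟨q, hq, hqy⟩ := Finset.mem_image.1 hmem
        have := hnew (s q) (hsU q)
        rw [← hqy, dist_self] at this
        linarith
      refine ⟨insert (u⁻¹ y) (S.image fun q => s q a), ?_, ?_, ?_⟩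
      · intro q hq
        rcases Finset.mem_insert.1 hq with rfl | hq
        · have h1 : u (u⁻¹ y) = y := u.apply_symm_apply y
          rw [← u.dist_eq, h1]
          exact hyu.le
        · obtain ⟨p, hp, rfl⟩ := Finset.mem_image.1 hq
          have h1 := hs p a
          have h2 := hS1 p hp
          rw [dist_comm, h1]
          linarith
      · intro p hp q hq hpq
        rcases Finset.mem_insert.1 hp with rfl | hp
        · rcases Finset.mem_insert.1 hq with rfl | hq
          · exact absurd rfl hpq
          · obtain ⟨q', hq', rfl⟩ := Finset.mem_image.1 hq
            exact hnew _ (hsU q')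
        · obtain ⟨p', hp', rfl⟩ := Finset.mem_image.1 hp
          rcases Finset.mem_insert.1 hq with rfl | hq
          · rw [dist_comm]
            exact hnew _ (hsU p')
          · obtain ⟨q', hq', rfl⟩ := Finset.mem_image.1 hq
            exact hsep _ hp' _ hq' (fun h => hpq (by rw [h]))
      · rw [Finset.card_insert_of_notMem hnotin, Finset.card_image_of_injOn hinj]
        omega
  obtain ⟨N, hN⟩ := separated_card_bound a t htpos
  obtain ⟨S, h1, h2, h3⟩ := key (N + 1) t htpos le_rfl
  have := hN S h1 h2
  omega

end DenseOrbits

section IsoGroup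

variable {X : Type*} [MetricSpace X]

/-- The embedding `g ↦ (g, g⁻¹)` of the isometry group. -/
def isoEmb (X : Type*) [MetricSpace X] (g : X ≃ᵢ X) : (X → X) × (X → X) := (⇑g, ⇑(g⁻¹))

/-- The topology of pointwise convergence (of maps and inverses) on the isometry group. -/
@[reducible] def isoTop (X : Type*) [MetricSpace X] : TopologicalSpace (X ≃ᵢ X) :=
  TopologicalSpace.induced (isoEmb X) inferInstance

attribute [local instance] isoTop

theorem isoEmb_inducing : Topology.IsInducing (isoEmb X) := ⟨rfl⟩

theorem iso_continuous_eval : Continuous fun p : (X ≃ᵢ X) × X => p.1 p.2 := by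
  have h1 : ∀ x, Continuous fun g : X ≃ᵢ X => g x := fun x =>
    (continuous_apply x).comp (continuous_fst.comp isoEmb_inducing.continuous)
  rw [continuous_iff_continuousAt]
  rintro ⟨g, x⟩
  rw [ContinuousAt, tendsto_iff_dist_tendsto_zero]
  have h2 : Continuous fun p : (X ≃ᵢ X) × X => dist p.2 x + dist (p.1 x) (g x) :=
    (continuous_snd.dist continuous_const).add
      (((h1 x).comp continuous_fst).dist continuous_const)
  have h3 := h2.tendsto (g, x)
  simp only [dist_self, add_zero] at h3
  refine squeeze_zero (fun _ => dist_nonneg) (fun p => ?_) h3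
  have := dist_triangle (p.1 p.2) (p.1 x) (g x)
  rwa [p.1.dist_eq] at this

theorem iso_topologicalGroup : IsTopologicalGroup (X ≃ᵢ X) := by
  have hinv : Continuous fun g : X ≃ᵢ X => g⁻¹ := by
    rw [continuous_induced_rng]
    have : (isoEmb X ∘ fun g : X ≃ᵢ X => g⁻¹) = Prod.swap ∘ isoEmb X := by
      funext g
      simp [isoEmb]
    rw [this]
    exact continuous_swap.comp isoEmb_inducing.continuous
  refine { continuous_mul := ?_, continuous_inv := hinv }
  rw [continuous_induced_rng]
  refine Continuous.prodMk (continuous_pi fun x => ?_) (continuous_pi fun x => ?_)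
  · exact iso_continuous_eval.comp (continuous_fst.prodMk
      (iso_continuous_eval.comp (continuous_snd.prodMk continuous_const)))
  · have h : ∀ p : (X ≃ᵢ X) × (X ≃ᵢ X), (p.1 * p.2)⁻¹ x = p.2⁻¹ (p.1⁻¹ x) := by
      intro p; rw [mul_inv_rev, IsometryEquiv.mul_apply]
    change Continuous fun p : (X ≃ᵢ X) × (X ≃ᵢ X) => (p.1 * p.2)⁻¹ x
    simp only [h]
    exact iso_continuous_eval.comp ((hinv.comp continuous_snd).prodMk
      (iso_continuous_eval.comp ((hinv.comp continuous_fst).prodMk continuous_const)))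

attribute [local instance] iso_topologicalGroup

/-- The isometries moving `p` by at most `r`. -/
def isoBall (p : X) (r : ℝ) : Set (X ≃ᵢ X) := {g | dist (g p) p ≤ r}

theorem isoBall_compact [ProperSpace X] (p : X) (r : ℝ) : IsCompact (isoBall p r) := by
  rw [isoEmb_inducing.isCompact_iff]
  have himg : isoEmb X '' (isoBall p r) =
      ({q | ∀ x y, dist (q.1 x) y = dist x (q.2 y)} ∩ {q | dist (q.1 p) p ≤ r}) := by
    ext q
    constructor
    · rintro ⟨g, hg, rfl⟩
      refine ⟨fun x y => ?_, hg⟩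
      have h1 : g (g⁻¹ y) = y := g.apply_symm_apply y
      rw [isoEmb, ← g.dist_eq x, h1]
    · rintro ⟨h1, h2⟩
      have hl : ∀ x, q.2 (q.1 x) = x := fun x => by
        have := h1 x (q.1 x)
        rw [dist_self] at this
        exact (dist_eq_zero.1 this.symm).symm
      have hr : ∀ x, q.1 (q.2 x) = x := fun x => by
        have := h1 (q.2 x) x
        rw [dist_self] at this
        exact dist_eq_zero.1 this
      refine ⟨⟨⟨q.1, q.2, hl, hr⟩, Isometry.of_dist_eq fun x y => ?_⟩, h2, rfl⟩
      change dist (q.1 x) (q.1 y) = dist x y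
      rw [h1, hl]
  have hcl : IsClosed (isoEmb X '' (isoBall p r)) := by
    rw [himg]
    have e1 : ∀ x, Continuous fun q : (X → X) × (X → X) => q.1 x := fun x =>
      (continuous_apply x).comp continuous_fst
    have e2 : ∀ x, Continuous fun q : (X → X) × (X → X) => q.2 x := fun x =>
      (continuous_apply x).comp continuous_snd
    refine IsClosed.inter ?_ (isClosed_le ((e1 p).dist continuous_const) continuous_const)
    simp only [ofPred_forall]
    exact isClosed_iInter fun x => isClosed_iInter fun y =>
      isClosed_eq ((e1 x).dist continuous_const) (continuous_const.dist (e2 y))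
  have hcomp : IsCompact ((Set.univ.pi fun x => closedBall p (r + dist x p)) ×ˢ
      (Set.univ.pi fun x => closedBall p (r + dist x p)) : Set ((X → X) × (X → X))) :=
    (isCompact_univ_pi fun x => isCompact_closedBall _ _).prod
      (isCompact_univ_pi fun x => isCompact_closedBall _ _)
  refine hcomp.of_isClosed_subset hcl ?_
  rintro _ ⟨g, hg, rfl⟩
  have hg' : dist (g p) p ≤ r := hg
  refine ⟨fun x _ => ?_, fun x _ => ?_⟩
  · rw [mem_closedBall]
    have := dist_triangle (g x) (g p) p
    rw [g.dist_eq] at this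
    simp only [isoEmb]
    linarith
  · rw [mem_closedBall]
    have h1 : g (g⁻¹ x) = x := g.apply_symm_apply x
    have := dist_triangle x p (g p)
    rw [dist_comm p (g p)] at this
    simp only [isoEmb]
    rw [← g.dist_eq, h1]
    linarith

theorem iso_eval_continuous (x : X) : Continuous fun g : X ≃ᵢ X => g x :=
  iso_continuous_eval.comp (continuous_id.prodMk continuous_const)

theorem isoBall_nhds (p : X) (r : ℝ) (hr : 0 < r) : isoBall p r ∈ nhds (1 : X ≃ᵢ X) := by
  have : IsOpen {g : X ≃ᵢ X | dist (g p) p < r} :=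
    isOpen_lt ((iso_eval_continuous p).dist continuous_const) continuous_const
  refine Filter.mem_of_superset (this.mem_nhds ?_) (fun g (hg : dist (g p) p < r) => (hg.le : dist (g p) p ≤ r))
  simpa using hr

theorem iso_locallyCompact [ProperSpace X] [Nonempty X] : LocallyCompactSpace (X ≃ᵢ X) := by
  obtain ⟨p⟩ := ‹Nonempty X›
  exact (isoBall_compact p 1).locallyCompactSpace_of_mem_nhds_of_group
    (isoBall_nhds p 1 one_pos)

theorem iso_sigmaCompact [ProperSpace X] [Nonempty X] : SigmaCompactSpace (X ≃ᵢ X) := by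
  obtain ⟨p⟩ := ‹Nonempty X›
  refine ⟨⟨fun n : ℕ => isoBall p n, fun n => isoBall_compact p n, ?_⟩⟩
  rw [eq_univ_iff_forall]
  intro g
  obtain ⟨n, hn⟩ := exists_nat_ge (dist (g p) p)
  exact mem_iUnion.2 ⟨n, hn⟩

/-- Transitivity of the isometry group. -/
theorem iso_transitive [ProperSpace X] [PreconnectedSpace X] (hsym : PointSymmetric X) (a z : X) :
    ∃ g : X ≃ᵢ X, g a = z := by
  have h := fun n : ℕ => dense_orbit hsym ⊤ (fun _ _ _ => trivial) a z (1 / (n + 1 : ℝ))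
    (by positivity)
  choose u _ hu using h
  -- the images of a closed ball form a compact set
  have hc : IsClosed ((fun g : X ≃ᵢ X => g a) '' isoBall a (dist z a + 1)) :=
    ((isoBall_compact a _).image (iso_eval_continuous a)).isClosed
  have hz : z ∈ closure ((fun g : X ≃ᵢ X => g a) '' isoBall a (dist z a + 1)) := by
    rw [Metric.mem_closure_iff]
    intro ε hε
    obtain ⟨n, hn⟩ := exists_nat_one_div_lt hε
    refine ⟨u n a, ⟨u n, ?_, rfl⟩, ?_⟩
    · have h1 := hu n
      have h2 : (1 : ℝ) / (n + 1) ≤ 1 := by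
        rw [div_le_one (by positivity)]
        linarith [Nat.cast_nonneg (α := ℝ) n]
      have h3 := dist_triangle (u n a) z a
      change dist (u n a) a ≤ _
      linarith
    · rw [dist_comm]
      exact (hu n).trans hn
  rw [hc.closure_eq] at hz
  obtain ⟨g, -, hg⟩ := hz
  exact ⟨g, hg⟩

attribute [local instance] iso_locallyCompact iso_sigmaCompact

theorem iso_unimodular [ProperSpace X] [PreconnectedSpace X] [Nonempty X]
    [MeasurableSpace (X ≃ᵢ X)] [BorelSpace (X ≃ᵢ X)]
    (hsym : PointSymmetric X) (L : Measure (X ≃ᵢ X)) [L.IsHaarMeasure] [L.InnerRegular]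
    (g : X ≃ᵢ X) : Measure.modularCharacter g = 1 := by
  obtain ⟨o⟩ := ‹Nonempty X›
  have hm : ∀ p r, MeasurableSet (isoBall (X := X) p r) := fun p r =>
    (isClosed_le ((iso_eval_continuous p).dist continuous_const) continuous_const).measurableSet
  have hfin : ∀ p r, L (isoBall p r) ≠ ⊤ := fun p r => (isoBall_compact p r).measure_lt_top.ne
  have hpos : ∀ p r, 0 < r → L (isoBall p r) ≠ 0 := fun p r hr =>
    (Measure.measure_pos_of_mem_nhds L (isoBall_nhds p r hr)).ne'
  have hmap : ∀ (h : X ≃ᵢ X) (p : X) (r : ℝ), L ((fun k => k * h) ⁻¹' isoBall p r) =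
      (Measure.modularCharacter h : ℝ≥0∞) * L (isoBall p r) := by
    intro h p r
    have h1 := Measure.map_right_mul_eq_modularCharacterFun_smul L h
    rw [← Measure.map_apply (measurable_mul_const h) (hm p r), h1]
    rfl
  have hrefl : ∀ s x, IsRefl (X := X) s x → s ∈ (Measure.modularCharacter (G := X ≃ᵢ X)).ker := by
    intro s x hs
    have h1 := hmap s x 1
    have h2 : (fun k => k * s) ⁻¹' isoBall x 1 = isoBall x 1 := by
      ext k
      simp only [isoBall, mem_preimage, mem_ofPred_eq, IsometryEquiv.mul_apply, hs.fix]
    rw [h2] at h1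
    rw [MonoidHom.mem_ker]
    have h3 : (Measure.modularCharacter s : ℝ≥0∞) = 1 := by
      have h4 : (1 : ℝ≥0∞) * L (isoBall x 1) = (Measure.modularCharacter s : ℝ≥0∞) *
        L (isoBall x 1) := by rw [one_mul]; exact h1
      exact ((ENNReal.mul_left_inj (hpos x 1 one_pos) (hfin x 1)).1 h4).symm
    exact_mod_cast h3
  have hlow : ∀ g : X ≃ᵢ X, L (isoBall o 1) ≤
      (Measure.modularCharacter g : ℝ≥0∞) * L (isoBall o 2) := by
    intro g
    obtain ⟨u, hu, hd⟩ := dense_orbit hsym _ hrefl o (g o) 1 one_pos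
    rw [MonoidHom.mem_ker] at hu
    have h1 : Measure.modularCharacter (u⁻¹ * g) = Measure.modularCharacter g := by
      have : Measure.modularCharacter (u * (u⁻¹ * g)) = Measure.modularCharacter (u⁻¹ * g) := by
        rw [map_mul, hu, one_mul]
      rw [← this, mul_inv_cancel_left]
    rw [← h1, ← hmap]
    refine measure_mono fun k hk => ?_
    have hk' : dist (k o) o ≤ 1 := hk
    change dist ((k * (u⁻¹ * g)) o) o ≤ 2
    have h2 := dist_triangle ((k * (u⁻¹ * g)) o) (k o) o
    rw [IsometryEquiv.mul_apply, k.dist_eq, IsometryEquiv.mul_apply, ← u.dist_eq (u⁻¹ (g o)) o,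
      show u (u⁻¹ (g o)) = g o from u.apply_symm_apply _, dist_comm (g o)] at h2
    simp only [IsometryEquiv.mul_apply] at h2 ⊢
    linarith
  have hge : ∀ g : X ≃ᵢ X, 1 ≤ Measure.modularCharacter g := by
    intro g
    by_contra hlt
    push Not at hlt
    have h1 : Filter.Tendsto (fun n : ℕ => ((Measure.modularCharacter g ^ n : ℝ≥0) : ℝ≥0∞) *
        L (isoBall o 2)) Filter.atTop (nhds 0) := by
      have h2 := NNReal.tendsto_pow_atTop_nhds_zero_of_lt_one hlt
      have h3 := ENNReal.Tendsto.mul_const (ENNReal.tendsto_coe.2 h2)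
        (Or.inr (hfin o 2))
      simpa using h3
    have h2 : L (isoBall o 1) ≤ 0 := ge_of_tendsto' h1 fun n => by
      have := hlow (g ^ n)
      rwa [map_pow] at this
    exact hpos o 1 one_pos (le_antisymm h2 bot_le)
  refine le_antisymm ?_ (hge g)
  have h1 := hge g⁻¹
  have h2 : Measure.modularCharacter g * Measure.modularCharacter g⁻¹ = 1 := by
    rw [← map_mul, mul_inv_cancel, map_one]
  calc Measure.modularCharacter g ≤ Measure.modularCharacter g * Measure.modularCharacter g⁻¹ :=
        le_mul_of_one_le_right bot_le h1
    _ = 1 := h2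

/-- A bi-invariant, inversion invariant measure on the isometry group, with the properties
used in the mass transport argument. -/
theorem exists_iso_haar [ProperSpace X] [PreconnectedSpace X] [MeasurableSpace X] [BorelSpace X]
    (hsym : PointSymmetric X) (o : X) :
    ∃ (m : MeasurableSpace (X ≃ᵢ X)) (L : @Measure (X ≃ᵢ X) m),
      SigmaFinite L ∧ (Measurable fun g : X ≃ᵢ X => g o) ∧
      MeasurePreserving (fun g : X ≃ᵢ X => g⁻¹) L L ∧
      ∃ v : ℝ≥0∞, v ≠ 0 ∧ v ≠ ⊤ ∧ ∀ y : X, L {g | dist y (g o) ≤ 1} = v := by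
  have : Nonempty X := ⟨o⟩
  let m : MeasurableSpace (X ≃ᵢ X) := borel _
  have : BorelSpace (X ≃ᵢ X) := ⟨rfl⟩
  let L : Measure (X ≃ᵢ X) := Measure.haar
  have hir : L.InnerRegular := inferInstance
  have hright : L.IsMulRightInvariant := by
    refine ⟨fun g => ?_⟩
    have h1 := Measure.map_right_mul_eq_modularCharacterFun_smul L g
    have h2 : Measure.modularCharacterFun g = 1 := iso_unimodular hsym L g
    rw [h1, h2, one_smul]
  have hm : MeasurableSet (isoBall (X := X) o 1) := 
    (isClosed_le ((iso_eval_continuous o).dist continuous_const) continuous_const).measurableSet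
  have hfin : L (isoBall o 1) ≠ ⊤ := (isoBall_compact o 1).measure_lt_top.ne
  have hpos : L (isoBall o 1) ≠ 0 := 
    (Measure.measure_pos_of_mem_nhds L (isoBall_nhds o 1 one_pos)).ne'
  have hinv : L.inv = L := by
    have hc := Measure.isMulLeftInvariant_eq_smul_of_innerRegular L.inv L
    have h1 : L.inv (isoBall o 1) = L (isoBall o 1) := by
      rw [Measure.inv_apply]
      congr 1
      ext g
      change dist (g⁻¹ o) o ≤ 1 ↔ dist (g o) o ≤ 1
      rw [← g.dist_eq, show g (g⁻¹ o) = o from g.apply_symm_apply o, dist_comm]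
    rw [hc] at h1
    have h2 : (Measure.haarScalarFactor L.inv L : ℝ≥0∞) * L (isoBall o 1) = 1 * L (isoBall o 1) := by
      rw [one_mul]; exact h1
    have h3 := (ENNReal.mul_left_inj hpos hfin).1 h2
    have h4 : Measure.haarScalarFactor L.inv L = 1 := by exact_mod_cast h3
    rw [h4, one_smul] at hc
    exact hc
  refine ⟨m, L, inferInstance, (iso_eval_continuous o).measurable, ⟨measurable_inv, hinv⟩,
    L (isoBall o 1), hpos, hfin, fun y => ?_⟩
  obtain ⟨k, rfl⟩ := iso_transitive hsym o y
  have h1 : {g : X ≃ᵢ X | dist (k o) (g o) ≤ 1} = (fun g => k⁻¹ * g) ⁻¹' isoBall o 1 := by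
    ext g
    change dist (k o) (g o) ≤ 1 ↔ dist ((k⁻¹ * g) o) o ≤ 1
    rw [IsometryEquiv.mul_apply, ← k.dist_eq (k⁻¹ (g o)),
      show k (k⁻¹ (g o)) = g o from k.apply_symm_apply _, dist_comm]
  rw [h1, measure_preimage_mul]

end IsoGroup

section PathSums

open scoped Classical

variable {X : Type*} [MetricSpace X]

/-- The total transition probability out of `x`. -/
def gQ (g : Config (X × X)) (x : X) : ℝ≥0∞ := ∑' y, gP g x y

/-- Forward form of the path weight. -/
def fw (g : Config (X × X)) (n : ℕ) (f : Fin (n + 1) → X) : ℝ≥0∞ :=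
  gC g (f 0) * ∏ j : Fin n, gP g (f j.castSucc) (f j.succ)

/-- Sum of the path weights under vertex constraints. -/
def pathSum (g : Config (X × X)) (n : ℕ) (C : ℕ → Set X) : ℝ≥0∞ :=
  ∑' f : Fin (n + 1) → X,
    if ∀ j : Fin (n + 1), f j ∈ gVertices g ∧ f j ∈ C j then fw g n f else 0

theorem gC_ne_zero (g : Config (X × X)) (x : X) : gC g x ≠ 0 := by
  simp [gC]

theorem gP_vertex {g : Config (X × X)} (hs : ∀ x y, (x, y) ∈ g.1 ↔ (y, x) ∈ g.1) {x y : X}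
    (hy : y ∉ gVertices g) : gP g x y = 0 := by
  rw [gP, if_neg]
  rintro (h | ⟨rfl, h⟩)
  · exact hy ⟨x, (hs _ _).1 h⟩
  · exact hy h

theorem gC_mul_gP {g : Config (X × X)} (hf : ∀ x, gC g x ≠ ⊤) (x y : X) :
    gC g x * gP g x y = if (x, y) ∈ g.1 ∨ (x = y ∧ x ∈ gVertices g) then 1 else 0 := by
  rw [gP]
  split_ifs
  · exact ENNReal.mul_inv_cancel (gC_ne_zero g x) (hf x)
  · exact mul_zero _

theorem gC_reversible {g : Config (X × X)} (hs : ∀ x y, (x, y) ∈ g.1 ↔ (y, x) ∈ g.1)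
    (hf : ∀ x, gC g x ≠ ⊤) (x y : X) : gC g x * gP g x y = gC g y * gP g y x := by
  rw [gC_mul_gP hf, gC_mul_gP hf]
  have : ((x, y) ∈ g.1 ∨ (x = y ∧ x ∈ gVertices g)) ↔
      ((y, x) ∈ g.1 ∨ (y = x ∧ y ∈ gVertices g)) := by
    rw [hs x y]
    refine or_congr Iff.rfl ⟨?_, ?_⟩ <;> rintro ⟨rfl, h⟩ <;> exact ⟨rfl, h⟩
  simp only [this]

theorem gC_mul_gQ {g : Config (X × X)} (hf : ∀ x, gC g x ≠ ⊤) {x : X} (hx : x ∈ gVertices g) :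
    gC g x * gQ g x = ((insert x {y | (x, y) ∈ g.1} : Set X).encard : ℝ≥0∞) := by
  rw [gQ, ← ENNReal.tsum_mul_left, ← ENNReal.tsum_set_one,
    tsum_subtype (insert x {y | (x, y) ∈ g.1} : Set X) (fun _ => (1 : ℝ≥0∞))]
  refine tsum_congr fun y => ?_
  rw [gC_mul_gP hf, Set.indicator_apply]
  refine if_congr ?_ rfl rfl
  rw [mem_insert_iff, mem_ofPred_eq]
  constructor
  · rintro (h | ⟨rfl, h⟩)
    · exact Or.inr h
    · exact Or.inl rfl
  · rintro (rfl | h)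
    · exact Or.inr ⟨rfl, hx⟩
    · exact Or.inl h

theorem gQ_le_one {g : Config (X × X)} (hf : ∀ x, gC g x ≠ ⊤) {x : X} (hx : x ∈ gVertices g) :
    gQ g x ≤ 1 := by
  rw [← ENNReal.mul_le_mul_iff_right (gC_ne_zero g x) (hf x), gC_mul_gQ hf hx, mul_one, gC]
  have := Set.encard_insert_le {y | (x, y) ∈ g.1} x
  exact_mod_cast (ENat.toENNReal_le.2 this)

theorem gQ_eq_one {g : Config (X × X)} (hf : ∀ x, gC g x ≠ ⊤) {x : X} (hx : x ∈ gVertices g)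
    (hl : (x, x) ∉ g.1) : gQ g x = 1 := by
  rw [← ENNReal.mul_right_inj (gC_ne_zero g x) (hf x), gC_mul_gQ hf hx, mul_one, gC]
  rw [Set.encard_insert_of_notMem (by simpa using hl)]
  simp

theorem gC_mul_gQ_loop {g : Config (X × X)} (hf : ∀ x, gC g x ≠ ⊤) {x : X}
    (hx : x ∈ gVertices g) :
    gC g x * gQ g x + (if (x, x) ∈ g.1 then 1 else 0) ≤ gC g x := by
  split_ifs with hl
  · rw [gC_mul_gQ hf hx, Set.insert_eq_of_mem (by simpa using hl), gC]
  · rw [gQ_eq_one hf hx hl, mul_one, add_zero]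

theorem pathSum_first {g : Config (X × X)} (hs : ∀ x y, (x, y) ∈ g.1 ↔ (y, x) ∈ g.1)
    (hf : ∀ x, gC g x ≠ ⊤) (n : ℕ) (C : ℕ → Set X) (hC : C 0 = univ) :
    pathSum g (n + 1) C = ∑' h : Fin (n + 1) → X,
      if ∀ j : Fin (n + 1), h j ∈ gVertices g ∧ h j ∈ C (j + 1) then gQ g (h 0) * fw g n h
        else 0 := by
  rw [pathSum, ← (Fin.consEquiv (fun _ : Fin (n + 2) => X)).tsum_eq, ENNReal.tsum_prod',
    ENNReal.tsum_comm]
  refine tsum_congr fun h => ?_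
  have hterm : ∀ y : X, (if ∀ j : Fin (n + 2),
        (Fin.cons y h : Fin (n + 2) → X) j ∈ gVertices g ∧
        (Fin.cons y h : Fin (n + 2) → X) j ∈ C j
      then fw g (n + 1) (Fin.cons y h : Fin (n + 2) → X) else 0) =
      (if ∀ j : Fin (n + 1), h j ∈ gVertices g ∧ h j ∈ C (j + 1) then
        gP g (h 0) y * fw g n h else 0) := by
    intro y
    have h1 : (∀ j : Fin (n + 2), (Fin.cons y h : Fin (n + 2) → X) j ∈ gVertices g ∧
        (Fin.cons y h : Fin (n + 2) → X) j ∈ C j) ↔ (y ∈ gVertices g ∧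
        ∀ j : Fin (n + 1), h j ∈ gVertices g ∧ h j ∈ C (j + 1)) := by
      rw [Fin.forall_fin_succ]
      simp [hC]
    have h2 : fw g (n + 1) (Fin.cons y h : Fin (n + 2) → X) = gP g (h 0) y * fw g n h := by
      rw [fw, fw, Fin.prod_univ_succ]
      simp only [Fin.cons_zero, Fin.castSucc_zero, Fin.cons_succ, ← Fin.succ_castSucc]
      rw [← mul_assoc, gC_reversible hs hf y (h 0)]
      ring
    rw [h2]
    by_cases hy : y ∈ gVertices g
    · refine if_congr (h1.trans (by simp [hy])) rfl rfl
    · rw [gP_vertex hs hy, zero_mul]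
      simp
  refine (tsum_congr hterm).trans ?_
  split_ifs
  · rw [ENNReal.tsum_mul_right, gQ]
  · simp

theorem pathSum_last {g : Config (X × X)} (hs : ∀ x y, (x, y) ∈ g.1 ↔ (y, x) ∈ g.1)
    (n : ℕ) (C : ℕ → Set X) (hC : C (n + 1) = univ) :
    pathSum g (n + 1) C = ∑' h : Fin (n + 1) → X,
      if ∀ j : Fin (n + 1), h j ∈ gVertices g ∧ h j ∈ C j then gQ g (h (Fin.last n)) * fw g n h
        else 0 := by
  rw [pathSum, ← (Fin.snocEquiv (fun _ : Fin (n + 2) => X)).tsum_eq, ENNReal.tsum_prod',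
    ENNReal.tsum_comm]
  refine tsum_congr fun h => ?_
  have hterm : ∀ y : X, (if ∀ j : Fin (n + 2),
        (Fin.snoc h y : Fin (n + 2) → X) j ∈ gVertices g ∧
        (Fin.snoc h y : Fin (n + 2) → X) j ∈ C j
      then fw g (n + 1) (Fin.snoc h y : Fin (n + 2) → X) else 0) =
      (if ∀ j : Fin (n + 1), h j ∈ gVertices g ∧ h j ∈ C j then
        gP g (h (Fin.last n)) y * fw g n h else 0) := by
    intro y
    have h1 : (∀ j : Fin (n + 2), (Fin.snoc h y : Fin (n + 2) → X) j ∈ gVertices g ∧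
        (Fin.snoc h y : Fin (n + 2) → X) j ∈ C j) ↔ (y ∈ gVertices g ∧
        ∀ j : Fin (n + 1), h j ∈ gVertices g ∧ h j ∈ C j) := by
      rw [Fin.forall_fin_succ']
      simp [hC, and_comm]
    have h2 : fw g (n + 1) (Fin.snoc h y : Fin (n + 2) → X) =
        gP g (h (Fin.last n)) y * fw g n h := by
      have h0 : (Fin.snoc h y : Fin (n + 2) → X) 0 = h 0 := by
        rw [← Fin.castSucc_zero, Fin.snoc_castSucc]
      rw [fw, fw, Fin.prod_univ_castSucc, h0]
      simp only [Fin.snoc_castSucc, Fin.succ_castSucc, Fin.succ_last, Fin.snoc_last]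
      ring
    rw [h2]
    by_cases hy : y ∈ gVertices g
    · refine if_congr (h1.trans (by simp [hy])) rfl rfl
    · rw [gP_vertex hs hy, zero_mul]
      simp
  refine (tsum_congr hterm).trans ?_
  split_ifs
  · rw [ENNReal.tsum_mul_right, gQ]
  · simp

/-- The shift identity for path sums. -/
theorem pathSum_shift {g : Config (X × X)} (hs : ∀ x y, (x, y) ∈ g.1 ↔ (y, x) ∈ g.1)
    (hf : ∀ x, gC g x ≠ ⊤) (hl : ∀ x, (x, x) ∉ g.1) (n : ℕ) (C D : ℕ → Set X)
    (hC : C 0 = univ) (hD : D (n + 1) = univ) (hCD : ∀ j, j ≤ n → C (j + 1) = D j) :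
    pathSum g (n + 1) C = pathSum g (n + 1) D := by
  rw [pathSum_first hs hf n C hC, pathSum_last hs n D hD]
  refine tsum_congr fun h => ?_
  have h1 : (∀ j : Fin (n + 1), h j ∈ gVertices g ∧ h j ∈ C (j + 1)) ↔
      ∀ j : Fin (n + 1), h j ∈ gVertices g ∧ h j ∈ D j := by
    refine forall_congr' fun j => ?_
    rw [hCD j (by omega)]
  simp only [h1]
  split_ifs with hh
  · rw [gQ_eq_one hf (hh _).1 (hl _), gQ_eq_one hf (hh _).1 (hl _)]
  · rfl

theorem rev_prod {g : Config (X × X)} (hs : ∀ x y, (x, y) ∈ g.1 ↔ (y, x) ∈ g.1)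
    (hf : ∀ x, gC g x ≠ ⊤) (F : ℕ → X) (m : ℕ) :
    gC g (F m) * ∏ j ∈ Finset.range m, gP g (F (m - j)) (F (m - j - 1)) =
      gC g (F 0) * ∏ j ∈ Finset.range m, gP g (F j) (F (j + 1)) := by
  induction m with
  | zero => simp
  | succ m ih =>
    rw [Finset.prod_range_succ', Finset.prod_range_succ _ m, ← mul_assoc (gC g (F 0)), ← ih]
    have h1 : ∀ j, m + 1 - (j + 1) = m - j := by intro j; omega
    simp only [h1, Nat.sub_zero]
    rw [mul_comm (∏ k ∈ Finset.range m, _), ← mul_assoc, gC_reversible hs hf]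
    ring

theorem walkWeight_eq_fw {g : Config (X × X)} (hs : ∀ x y, (x, y) ∈ g.1 ↔ (y, x) ∈ g.1)
    (hf : ∀ x, gC g x ≠ ⊤) (k : ℕ) (f : Fin (2 * k + 1) → X) :
    walkWeight g k f = fw g (2 * k) f := by
  set F : ℕ → X := fun n => if h : n < 2 * k + 1 then f ⟨n, h⟩ else f 0 with hF
  have hFf : ∀ n (h : n < 2 * k + 1), f ⟨n, h⟩ = F n := fun n h => by
    simp only [hF, dif_pos h]
  have e1 : walkWeight g k f = gC g (F k) *
      (∏ j ∈ Finset.range k, gP g (F (k + j)) (F (k + j + 1))) *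
      (∏ j ∈ Finset.range k, gP g (F (k - j)) (F (k - j - 1))) := by
    rw [walkWeight]
    simp only [hFf]
    rw [Finset.prod_range, Finset.prod_range]
  have e2 : fw g (2 * k) f = gC g (F 0) * ∏ j ∈ Finset.range (2 * k), gP g (F j) (F (j + 1)) := by
    rw [fw, Finset.prod_range]
    congr 1
    refine Finset.prod_congr rfl fun j _ => ?_
    rw [← hFf j (by omega), ← hFf (j + 1) (by omega)]
    rfl
  rw [e1, e2, mul_right_comm, rev_prod hs hf, two_mul, Finset.prod_range_add, mul_assoc]

end PathSums

section Rects

variable {X Ξ : Type*} [MeasurableSpace X] [MeasurableSpace Ξ]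

/-- Measurable cylinders in `X^ℤ × Ξ`. -/
def rect (B : ℤ → Set X) (A : Set Ξ) : Set ((ℤ → X) × Ξ) := {p | (∀ i, p.1 i ∈ B i) ∧ p.2 ∈ A}

/-- `B` is measurable and only constrains the coordinates in `[-k, k]`. -/
def Supp (k : ℕ) (B : ℤ → Set X) : Prop :=
  (∀ i, MeasurableSet (B i)) ∧ ∀ i : ℤ, ¬ (-(k : ℤ) ≤ i ∧ i ≤ (k : ℤ)) → B i = univ

theorem rect_measurable {B : ℤ → Set X} {A : Set Ξ} (hB : ∀ i, MeasurableSet (B i))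
    (hA : MeasurableSet A) : MeasurableSet (rect B A) := by
  have : rect B A = (⋂ i, (fun p : (ℤ → X) × Ξ => p.1 i) ⁻¹' B i) ∩ Prod.snd ⁻¹' A := by
    ext p
    simp [rect]
  rw [this]
  refine (MeasurableSet.iInter fun i => ?_).inter (measurable_snd hA)
  exact ((measurable_pi_apply i).comp measurable_fst) (hB i)

theorem Supp.mono {k l : ℕ} {B : ℤ → Set X} (h : Supp k B) (hkl : k ≤ l) : Supp l B := by
  refine ⟨h.1, fun i hi => h.2 i fun h' => hi ⟨?_, ?_⟩⟩
  · have : (k : ℤ) ≤ l := by exact_mod_cast hkl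
    linarith [h'.1]
  · have : (k : ℤ) ≤ l := by exact_mod_cast hkl
    linarith [h'.2]

theorem rect_generate : (inferInstance : MeasurableSpace ((ℤ → X) × Ξ)) =
    MeasurableSpace.generateFrom
      {S | ∃ (k : ℕ) (B : ℤ → Set X) (A : Set Ξ), Supp k B ∧ MeasurableSet A ∧ S = rect B A} := by
  classical
  apply le_antisymm
  · refine sup_le ?_ ?_
    · rw [MeasurableSpace.pi, MeasurableSpace.comap_iSup]
      refine iSup_le fun i => ?_
      rw [MeasurableSpace.comap_comp]
      rintro _ ⟨B, hB, rfl⟩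
      refine MeasurableSpace.measurableSet_generateFrom
        ⟨i.natAbs, Function.update (fun _ => univ) i B, univ, ⟨fun j => ?_, fun j hj => ?_⟩,
          MeasurableSet.univ, ?_⟩
      · by_cases h : j = i
        · subst h; simpa using hB
        · simp [h]
      · have : j ≠ i := by
          rintro rfl
          exact hj ⟨by omega, by omega⟩
        simp [this]
      · ext p
        simp only [rect, mem_preimage, comp_apply, mem_ofPred_eq, mem_univ, and_true]
        constructor
        · intro h j
          by_cases hj : j = i
          · subst hj; simpa using h
          · simp [hj]
        · intro h
          simpa using h i
    · rintro _ ⟨A, hA, rfl⟩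
      refine MeasurableSpace.measurableSet_generateFrom
        ⟨0, fun _ => univ, A, ⟨fun j => MeasurableSet.univ, fun _ _ => rfl⟩, hA, ?_⟩
      ext p
      simp [rect]
  · refine MeasurableSpace.generateFrom_le ?_
    rintro _ ⟨k, B, A, hB, hA, rfl⟩
    exact rect_measurable hB.1 hA

theorem rect_inter (B B' : ℤ → Set X) (A A' : Set Ξ) :
    rect B A ∩ rect B' A' = rect (fun i => B i ∩ B' i) (A ∩ A') := by
  ext p
  simp only [rect, mem_inter_iff, mem_ofPred_eq, forall_and]
  tauto

theorem Supp.inter {k l : ℕ} {B B' : ℤ → Set X} (h : Supp k B) (h' : Supp l B') :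
    Supp (max k l) (fun i => B i ∩ B' i) := by
  have h1 := h.mono (le_max_left k l)
  have h2 := h'.mono (le_max_right k l)
  exact ⟨fun i => (h1.1 i).inter (h2.1 i), fun i hi => by simp [h1.2 i hi, h2.2 i hi]⟩

theorem rect_isPiSystem : IsPiSystem
    {S : Set ((ℤ → X) × Ξ) | ∃ (k : ℕ) (B : ℤ → Set X) (A : Set Ξ),
      Supp k B ∧ MeasurableSet A ∧ S = rect B A} := by
  rintro _ ⟨k, B, A, hB, hA, rfl⟩ _ ⟨k', B', A', hB', hA', rfl⟩ -
  exact ⟨_, _, _, hB.inter hB', hA.inter hA', rect_inter _ _ _ _⟩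

theorem rect_univ : rect (fun _ : ℤ => (univ : Set X)) (univ : Set Ξ) = univ := by
  ext p; simp [rect]

theorem measure_ext_rect (μ ν : Measure ((ℤ → X) × Ξ)) [IsFiniteMeasure μ]
    (h : ∀ (k : ℕ) (B : ℤ → Set X) (A : Set Ξ), Supp k B → MeasurableSet A →
      μ (rect B A) = ν (rect B A)) : μ = ν := by
  refine ext_of_generate_finite _ rect_generate rect_isPiSystem ?_ ?_
  · rintro _ ⟨k, B, A, hB, hA, rfl⟩
    exact h k B A hB hA
  · have := h 0 (fun _ => univ) univ ⟨fun _ => MeasurableSet.univ, fun _ _ => rfl⟩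
      MeasurableSet.univ
    rwa [rect_univ] at this

theorem eq_of_add_le {a b c d : ℝ≥0∞} (h1 : a ≤ c) (h2 : b ≤ d) (h : a + b = c + d)
    (hd : d ≠ ⊤) : a = c := by
  refine le_antisymm h1 ?_
  have h3 : c + d ≤ a + d := by rw [← h]; gcongr
  exact (ENNReal.add_le_add_iff_right hd).1 h3

theorem measure_ext_rect_le (μ ν : Measure ((ℤ → X) × Ξ)) [IsProbabilityMeasure μ]
    [IsProbabilityMeasure ν]
    (h : ∀ (k : ℕ) (B : ℤ → Set X) (A : Set Ξ), Supp k B → MeasurableSet A →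
      μ (rect B A) ≤ ν (rect B A)) : μ = ν := by
  classical
  have key : ∀ (k : ℕ) (A : Set Ξ), MeasurableSet A → ∀ T : Finset ℤ, 
      (∀ i ∈ T, -(k : ℤ) ≤ i ∧ i ≤ k) → ∀ (B : ℤ → Set X),
      (∀ i, MeasurableSet (B i)) → (∀ i, i ∉ T → B i = univ) →
      μ (rect B A) = ν (rect B A) := by
    intro k A hA T
    induction T using Finset.induction_on with
    | empty =>
      intro _ B hB hT
      have hBu : B = fun _ => univ := funext fun i => hT i (by simp)
      subst hBu
      have hs : Supp k (fun _ : ℤ => (univ : Set X)) := ⟨hB, fun _ _ => rfl⟩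
      refine eq_of_add_le (h k _ A hs hA) (h k _ Aᶜ hs hA.compl) ?_ (measure_ne_top _ _)
      have hc : rect (fun _ : ℤ => (univ : Set X)) Aᶜ =
          (rect (fun _ : ℤ => (univ : Set X)) A)ᶜ := by
        ext p; simp [rect]
      rw [hc, measure_add_measure_compl (rect_measurable hB hA),
        measure_add_measure_compl (rect_measurable hB hA), measure_univ, measure_univ]
    | insert i T hi ih =>
      intro hk B hB hT
      have hk' : ∀ i ∈ T, -(k : ℤ) ≤ i ∧ i ≤ k := fun j hj => hk j (Finset.mem_insert_of_mem hj)
      have hupd : ∀ S : Set X, MeasurableSet S → ∀ j, MeasurableSet (Function.update B i S j) := by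
        intro S hS j
        by_cases hj : j = i
        · subst hj; simpa using hS
        · simpa [hj] using hB j
      have h0 := ih hk' (Function.update B i univ) (hupd _ MeasurableSet.univ) (by
        intro j hj
        by_cases hji : j = i
        · subst hji; simp
        · simp only [Function.update_of_ne hji]
          exact hT j (by simp [hji, hj]))
      have hsupp : ∀ S : Set X, MeasurableSet S → Supp k (Function.update B i S) := by
        intro S hS
        refine ⟨hupd S hS, fun j hj => ?_⟩
        have hji : j ≠ i := by
          rintro rfl
          exact hj (hk j (Finset.mem_insert_self _ _))
        rw [Function.update_of_ne hji]
        exact hT j fun hmem => by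
          rcases Finset.mem_insert.1 hmem with h1 | h1
          · exact hji h1
          · exact hj (hk' j h1)
      have hBB : Function.update B i (B i) = B := Function.update_eq_self i B
      have hsplit : rect (Function.update B i univ) A =
          rect B A ∪ rect (Function.update B i (B i)ᶜ) A := by
        ext p
        simp only [rect, mem_union, mem_ofPred_eq]
        constructor
        · rintro ⟨h1, h2⟩
          by_cases hp : p.1 i ∈ B i
          · left
            refine ⟨fun j => ?_, h2⟩
            by_cases hj : j = i
            · subst hj; exact hp
            · simpa [hj] using h1 j
          · right
            refine ⟨fun j => ?_, h2⟩
            by_cases hj : j = i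
            · subst hj; simpa using hp
            · simpa [hj] using h1 j
        · rintro (⟨h1, h2⟩ | ⟨h1, h2⟩)
          · refine ⟨fun j => ?_, h2⟩
            by_cases hj : j = i
            · subst hj; simp
            · simpa [hj] using h1 j
          · refine ⟨fun j => ?_, h2⟩
            by_cases hj : j = i
            · subst hj; simp
            · simpa [hj] using h1 j
      have hdisj : Disjoint (rect B A) (rect (Function.update B i (B i)ᶜ) A) := by
        rw [Set.disjoint_left]
        rintro p ⟨h1, _⟩ ⟨h2, _⟩
        have h3 := h2 i
        rw [Function.update_self] at h3
        exact h3 (h1 i)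
      have hm2 : MeasurableSet (rect (Function.update B i (B i)ᶜ) A) :=
        rect_measurable (hupd _ (hB i).compl) hA
      rw [hsplit, measure_union hdisj hm2, measure_union hdisj hm2] at h0
      have hs1 := hsupp (B i) (hB i)
      rw [hBB] at hs1
      exact eq_of_add_le (h k _ A hs1 hA) (h k _ A (hsupp _ (hB i).compl) hA) h0
        (measure_ne_top _ _)
  refine measure_ext_rect μ ν fun k B A hB hA => ?_
  exact key k A hA (Finset.Icc (-(k : ℤ)) k) (fun i hi => Finset.mem_Icc.1 hi) B hB.1
    (fun i hi => hB.2 i fun h' => hi (Finset.mem_Icc.2 h'))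

end Rects

section WalkSums

open scoped Classical

variable {X : Type*} [MetricSpace X]

/-- The integrand in the definition of `P̂_x`. -/
def walkSum (g : Config (X × X)) (x : X) (k : ℕ) (B : ℤ → Set X) : ℝ≥0∞ :=
  ∑' f : Fin (2 * k + 1) → X,
    (if (∀ j : Fin (2 * k + 1), f j ∈ gVertices g ∧ f j ∈ B ((j : ℤ) - k)) ∧
        f ⟨k, by omega⟩ ∈ closedBall x 1
      then walkWeight g k f else 0)

/-- The constraints of `walkSum` in the form used by `pathSum`. -/
def cst (x : X) (k : ℕ) (B : ℤ → Set X) (j : ℕ) : Set X :=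
  {y | y ∈ B ((j : ℤ) - k) ∧ (j = k → y ∈ closedBall x 1)}

theorem walkSum_eq_pathSum' {g : Config (X × X)} {k : ℕ}
    (hW : ∀ f, walkWeight g k f = fw g (2 * k) f) (x : X) (B : ℤ → Set X) :
    walkSum g x k B = pathSum g (2 * k) (cst x k B) := by
  rw [walkSum, pathSum]
  refine tsum_congr fun f => ?_
  rw [hW]
  refine if_congr ?_ rfl rfl
  constructor
  · rintro ⟨h1, h2⟩ j
    refine ⟨(h1 j).1, (h1 j).2, fun hj => ?_⟩
    have : j = ⟨k, by omega⟩ := Fin.ext hj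
    rw [this]
    exact h2
  · intro h
    exact ⟨fun j => ⟨(h j).1, (h j).2.1⟩, (h ⟨k, by omega⟩).2.2 rfl⟩

theorem walkSum_eq_pathSum {g : Config (X × X)} (hs : ∀ x y, (x, y) ∈ g.1 ↔ (y, x) ∈ g.1)
    (hf : ∀ x, gC g x ≠ ⊤) (x : X) (k : ℕ) (B : ℤ → Set X) :
    walkSum g x k B = pathSum g (2 * k) (cst x k B) :=
  walkSum_eq_pathSum' (fun f => walkWeight_eq_fw hs hf k f) x B

theorem tsum_fin_one (φ : X → ℝ≥0∞) :
    ∑' h : Fin (0 + 1) → X, φ (h 0) = ∑' y, φ y :=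
  (Equiv.funUnique (Fin 1) X).tsum_eq φ

theorem walkSum_zero (g : Config (X × X)) (x : X) :
    walkSum g x 0 (fun _ => univ) =
      ∑' y, if y ∈ gVertices g ∧ y ∈ closedBall x 1 then gC g y else 0 := by
  rw [walkSum_eq_pathSum' (fun f => by simp [walkWeight, fw]), pathSum,
    ← tsum_fin_one (fun y => if y ∈ gVertices g ∧ y ∈ closedBall x 1 then gC g y else 0)]
  refine tsum_congr fun h => ?_
  refine if_congr ?_ (by simp [fw]) rfl
  constructor
  · intro h1
    exact ⟨(h1 0).1, (h1 0).2.2 rfl⟩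
  · rintro h1 j
    have : j = 0 := Subsingleton.elim (α := Fin 1) _ _
    subst this
    exact ⟨h1.1, by simp, fun _ => h1.2⟩

theorem walkSum_one_le {g : Config (X × X)} (hs : ∀ x y, (x, y) ∈ g.1 ↔ (y, x) ∈ g.1)
    (hf : ∀ x, gC g x ≠ ⊤) (x : X) :
    walkSum g x 1 (fun _ => univ) ≤
      ∑' y, if y ∈ gVertices g ∧ y ∈ closedBall x 1 then gQ g y * gC g y else 0 := by
  rw [walkSum_eq_pathSum hs hf]
  change pathSum g (1 + 1) _ ≤ _
  rw [pathSum_first hs hf 1 _ (by ext; simp [cst])]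
  calc _ ≤ pathSum g (0 + 1) (fun j => cst x 1 (fun _ => univ) (j + 1)) := by
        rw [pathSum]
        refine ENNReal.tsum_le_tsum fun h => ?_
        change (if ∀ j : Fin (1 + 1), h j ∈ gVertices g ∧ h j ∈ cst x 1 (fun _ => univ) (j + 1)
          then gQ g (h 0) * fw g 1 h else 0) ≤
          (if ∀ j : Fin (1 + 1), h j ∈ gVertices g ∧ h j ∈ cst x 1 (fun _ => univ) (j + 1)
          then fw g 1 h else 0)
        split_ifs with hh
        · calc gQ g (h 0) * fw g 1 h ≤ 1 * fw g 1 h := by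
                gcongr
                exact gQ_le_one hf (hh 0).1
            _ = fw g 1 h := one_mul _
        · exact le_rfl
    _ = _ := by
        rw [pathSum_last hs 0 _ (by ext; simp [cst]),
          ← tsum_fin_one
            (fun y => if y ∈ gVertices g ∧ y ∈ closedBall x 1 then gQ g y * gC g y else 0)]
        refine tsum_congr fun h => ?_
        refine if_congr ?_ (by simp [fw]) rfl
        constructor
        · intro h1
          exact ⟨(h1 0).1, (h1 0).2.2 rfl⟩
        · rintro h1 j
          have : j = 0 := Subsingleton.elim (α := Fin 1) _ _
          subst this
          exact ⟨h1.1, by simp, fun _ => h1.2⟩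

theorem walkSum_loop {g : Config (X × X)} (hs : ∀ x y, (x, y) ∈ g.1 ↔ (y, x) ∈ g.1)
    (hf : ∀ x, gC g x ≠ ⊤) (x y : X) (hy : y ∈ closedBall x 1) (hl : (y, y) ∈ g.1) :
    walkSum g x 1 (fun _ => univ) + 1 ≤ walkSum g x 0 (fun _ => univ) := by
  rw [walkSum_zero]
  have h1 : (1 : ℝ≥0∞) ≤ ∑' z, if z = y then 1 else 0 := by
    rw [tsum_ite_eq]
  refine (add_le_add (walkSum_one_le hs hf x) h1).trans ?_
  rw [← ENNReal.tsum_add]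
  refine ENNReal.tsum_le_tsum fun z => ?_
  by_cases hz : z = y
  · subst hz
    have hv : z ∈ gVertices g := ⟨z, hl⟩
    have := gC_mul_gQ_loop hf hv
    rw [if_pos hl, mul_comm] at this
    simpa [hv, mem_closedBall.1 hy] using this
  · rw [if_neg hz, add_zero]
    split_ifs with h2
    · calc gQ g z * gC g z ≤ 1 * gC g z := by
            gcongr
            exact gQ_le_one hf h2.1
        _ = gC g z := one_mul _
    · exact le_rfl

theorem walkSum_noloop_le {g : Config (X × X)} (hs : ∀ x y, (x, y) ∈ g.1 ↔ (y, x) ∈ g.1)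
    (hf : ∀ x, gC g x ≠ ⊤) (x : X) :
    walkSum g x 1 (fun _ => univ) ≤ walkSum g x 0 (fun _ => univ) := by
  rw [walkSum_zero]
  refine (walkSum_one_le hs hf x).trans (ENNReal.tsum_le_tsum fun z => ?_)
  split_ifs with h2
  · calc gQ g z * gC g z ≤ 1 * gC g z := by
          gcongr
          exact gQ_le_one hf h2.1
      _ = gC g z := one_mul _
  · exact le_rfl

theorem encard_le_walkSum (g : Config (X × X)) (x : X) :
    ((g.1 ∩ (closedBall x 1 ×ˢ univ)).encard : ℝ≥0∞) ≤ walkSum g x 0 (fun _ => univ) := by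
  rw [walkSum_zero, ← ENNReal.tsum_set_one,
    tsum_subtype (g.1 ∩ (closedBall x 1 ×ˢ univ)) (fun _ => (1 : ℝ≥0∞)), ENNReal.tsum_prod']
  refine ENNReal.tsum_le_tsum fun a => ?_
  by_cases ha : a ∈ closedBall x 1
  · by_cases hv : a ∈ gVertices g
    · rw [if_pos ⟨hv, ha⟩, gC]
      refine le_trans ?_ le_self_add
      rw [← ENNReal.tsum_set_one, tsum_subtype {y | (a, y) ∈ g.1} (fun _ => (1 : ℝ≥0∞))]
      refine ENNReal.tsum_le_tsum fun b => ?_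
      rw [indicator_apply, indicator_apply]
      split_ifs with h1 h2 h2
      · exact le_rfl
      · exact absurd h1.1 h2
      · exact zero_le
      · exact le_rfl
    · refine le_trans (le_of_eq ?_) (zero_le)
      rw [ENNReal.tsum_eq_zero]
      intro b
      rw [indicator_of_notMem]
      rintro ⟨h, -⟩
      exact hv ⟨b, h⟩
  · refine le_trans (le_of_eq ?_) (zero_le)
    rw [ENNReal.tsum_eq_zero]
    intro b
    rw [indicator_of_notMem]
    rintro ⟨-, h⟩
    exact ha h.1

section Equivariance

variable {g g' : Config (X × X)} {γ : X ≃ᵢ X}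

theorem equiv_mem (h : g'.1 = (fun q : X × X => (γ q.1, γ q.2)) '' g.1) (x y : X) :
    (γ x, γ y) ∈ g'.1 ↔ (x, y) ∈ g.1 := by
  rw [h]
  constructor
  · rintro ⟨⟨a, b⟩, hab, he⟩
    simp only [Prod.mk.injEq, EmbeddingLike.apply_eq_iff_eq] at he
    rwa [← he.1, ← he.2]
  · intro hxy
    exact ⟨(x, y), hxy, rfl⟩

theorem equiv_vertices (h : g'.1 = (fun q : X × X => (γ q.1, γ q.2)) '' g.1) (x : X) :
    γ x ∈ gVertices g' ↔ x ∈ gVertices g := by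
  constructor
  · rintro ⟨y, hy⟩
    refine ⟨γ.symm y, ?_⟩
    rw [← equiv_mem h, γ.apply_symm_apply]
    exact hy
  · rintro ⟨y, hy⟩
    exact ⟨γ y, (equiv_mem h x y).2 hy⟩

theorem equiv_gC (h : g'.1 = (fun q : X × X => (γ q.1, γ q.2)) '' g.1) (x : X) :
    gC g' (γ x) = gC g x := by
  have : {y | (γ x, y) ∈ g'.1} = γ '' {y | (x, y) ∈ g.1} := by
    ext y
    obtain ⟨z, rfl⟩ := γ.surjective y
    rw [mem_ofPred_eq, equiv_mem h, γ.injective.mem_set_image, mem_ofPred_eq]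
  rw [gC, gC, this, γ.injective.encard_image]

theorem equiv_gP (h : g'.1 = (fun q : X × X => (γ q.1, γ q.2)) '' g.1) (x y : X) :
    gP g' (γ x) (γ y) = gP g x y := by
  rw [gP, gP, equiv_gC h]
  refine if_congr ?_ rfl rfl
  rw [equiv_mem h, equiv_vertices h, γ.injective.eq_iff]

theorem walkSum_equiv (h : g'.1 = (fun q : X × X => (γ q.1, γ q.2)) '' g.1) (x : X) (k : ℕ)
    (B : ℤ → Set X) :
    walkSum g' (γ x) k B = walkSum g x k (fun i => γ ⁻¹' B i) := by
  rw [walkSum, walkSum, ← (Equiv.arrowCongr (Equiv.refl (Fin (2 * k + 1))) γ.toEquiv).tsum_eq]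
  refine tsum_congr fun f => ?_
  have e : ∀ j, (Equiv.arrowCongr (Equiv.refl (Fin (2 * k + 1))) γ.toEquiv) f j = γ (f j) :=
    fun j => rfl
  simp only [walkWeight, e, equiv_vertices h, equiv_gC h, equiv_gP h, mem_closedBall, γ.dist_eq,
    mem_preimage]

end Equivariance

end WalkSums

section Model

open scoped Classical

variable {X : Type*} [MetricSpace X] [ProperSpace X] [MeasurableSpace X] [BorelSpace X]
  {Ξ : Type*} [MeasurableSpace Ξ]

/-- The finite dimensional distributions of `Phat` are given by the path sums. -/
def HasFdd (ℙ : Measure Ξ) (G : Ξ → Config (X × X)) (Z : ℝ≥0∞)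
    (Phat : X → Measure ((ℤ → X) × Ξ)) : Prop :=
  ∀ (x : X) (k : ℕ) (B : ℤ → Set X) (A : Set Ξ), Supp k B → MeasurableSet A →
    Phat x (rect B A) = Z⁻¹ * ∫⁻ ξ in A, walkSum (G ξ) x k B ∂ℙ

variable {ℙ : Measure Ξ} {G : Ξ → Config (X × X)} {Z : ℝ≥0∞} {Phat : X → Measure ((ℤ → X) × Ξ)}

theorem supp_univ (k : ℕ) : Supp k (fun _ : ℤ => (univ : Set X)) :=
  ⟨fun _ => MeasurableSet.univ, fun _ _ => rfl⟩

theorem lintegral_walkSum (hR : HasFdd ℙ G Z Phat) (hprob : ∀ x, IsProbabilityMeasure (Phat x))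
    (hZ0 : Z ≠ 0) (hZt : Z ≠ ⊤) (x : X) (k : ℕ) :
    ∫⁻ ξ, walkSum (G ξ) x k (fun _ => univ) ∂ℙ = Z := by
  have h := hR x k (fun _ => univ) univ (supp_univ k) MeasurableSet.univ
  have := hprob x
  rw [rect_univ, measure_univ, Measure.restrict_univ] at h
  have h2 : Z * 1 = Z * (Z⁻¹ * ∫⁻ ξ, walkSum (G ξ) x k (fun _ => univ) ∂ℙ) := by rw [← h]
  rw [← mul_assoc, ENNReal.mul_inv_cancel hZ0 hZt, one_mul, mul_one] at h2
  exact h2.symm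

theorem measurable_encard (hG : Measurable G) {S : Set (X × X)} (hS : MeasurableSet S) (n : ℕ∞) :
    MeasurableSet {ξ | ((G ξ).1 ∩ S).encard = n} := by
  have h : MeasurableSet {s : Config (X × X) | (s.1 ∩ S).encard = n} :=
    MeasurableSpace.measurableSet_generateFrom ⟨S, n, hS, rfl⟩
  exact hG h

theorem ae_finite_degree [Nonempty X] (hG : Measurable G) (hR : HasFdd ℙ G Z Phat)
    (hprob : ∀ x, IsProbabilityMeasure (Phat x)) (hZ0 : Z ≠ 0) (hZt : Z ≠ ⊤) :
    ∀ᵐ ξ ∂ℙ, ∀ x, gC (G ξ) x ≠ ⊤ := by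
  have h1 : ∀ x : X, ∀ᵐ ξ ∂ℙ, ((G ξ).1 ∩ (closedBall x 1 ×ˢ univ)).encard ≠ ⊤ := by
    intro x
    have hS : MeasurableSet (closedBall x 1 ×ˢ (univ : Set X)) :=
      measurableSet_closedBall.prod MeasurableSet.univ
    have hM := measurable_encard hG hS ⊤
    rw [ae_iff]
    simp only [not_not]
    by_contra hne
    have h2 : ∫⁻ ξ, indicator {ξ | ((G ξ).1 ∩ (closedBall x 1 ×ˢ univ)).encard = ⊤}
        (fun _ => (⊤ : ℝ≥0∞)) ξ ∂ℙ ≤ Z := by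
      rw [← lintegral_walkSum hR hprob hZ0 hZt x 0]
      refine lintegral_mono fun ξ => ?_
      rw [indicator_apply]
      split_ifs with h
      · have h3 := encard_le_walkSum (G ξ) x
        have h4 : ((G ξ).1 ∩ (closedBall x 1 ×ˢ univ)).encard = ⊤ := h
        rw [h4] at h3
        simpa using h3
      · exact zero_le
    rw [lintegral_indicator hM, lintegral_const, Measure.restrict_apply_univ,
      ENNReal.top_mul hne] at h2
    exact hZt (top_le_iff.1 h2)
  have h2 : ∀ᵐ ξ ∂ℙ, ∀ n : ℕ,
      ((G ξ).1 ∩ (closedBall (TopologicalSpace.denseSeq X n) 1 ×ˢ univ)).encard ≠ ⊤ :=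
    ae_all_iff.2 fun n => h1 _
  filter_upwards [h2] with ξ hξ x hx
  obtain ⟨n, hn⟩ : ∃ n, x ∈ closedBall (TopologicalSpace.denseSeq X n) 1 := by
    obtain ⟨n, hn⟩ := (TopologicalSpace.denseRange_denseSeq X).exists_dist_lt x one_pos
    exact ⟨n, mem_closedBall.2 hn.le⟩
  apply hξ n
  have h3 : ({y | (x, y) ∈ (G ξ).1}.encard : ℝ≥0∞) = ⊤ := by
    by_contra h
    exact ENNReal.add_ne_top.2 ⟨h, ENNReal.one_ne_top⟩ hx
  have h4 : {y | (x, y) ∈ (G ξ).1}.encard = ⊤ := by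
    simpa using h3
  rw [← top_le_iff, ← h4, ← (Prod.mk_right_injective x).encard_image]
  refine encard_le_encard ?_
  rintro _ ⟨y, hy, rfl⟩
  exact ⟨hy, hn, trivial⟩

theorem ae_no_loop [Nonempty X] (hG : Measurable G)
    (hs : ∀ ξ (x y : X), (x, y) ∈ (G ξ).1 ↔ (y, x) ∈ (G ξ).1) (hR : HasFdd ℙ G Z Phat)
    (hprob : ∀ x, IsProbabilityMeasure (Phat x)) (hZ0 : Z ≠ 0) (hZt : Z ≠ ⊤) :
    ∀ᵐ ξ ∂ℙ, ∀ x, (x, x) ∉ (G ξ).1 := by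
  have h1 : ∀ x : X, ∀ᵐ ξ ∂ℙ, ∀ y ∈ closedBall x 1, (y, y) ∉ (G ξ).1 := by
    intro x
    set S : Set (X × X) := {p | p.1 = p.2} ∩ (closedBall x 1 ×ˢ (univ : Set X)) with hSdef
    have hS : MeasurableSet S := (measurableSet_eq_fun measurable_fst measurable_snd).inter
      (measurableSet_closedBall.prod MeasurableSet.univ)
    have hM := (measurable_encard hG hS 0).compl
    set M := {ξ | ((G ξ).1 ∩ S).encard = 0}ᶜ with hMdef
    have hle : ∫⁻ ξ, (walkSum (G ξ) x 1 (fun _ => univ) + indicator M 1 ξ) ∂ℙ ≤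
        ∫⁻ ξ, walkSum (G ξ) x 0 (fun _ => univ) ∂ℙ := by
      refine lintegral_mono_ae ?_
      filter_upwards [ae_finite_degree hG hR hprob hZ0 hZt] with ξ hξ
      by_cases hm : ξ ∈ M
      · rw [indicator_of_mem hm, Pi.one_apply]
        have hm' : ((G ξ).1 ∩ S).encard ≠ 0 := hm
        obtain ⟨⟨a, b⟩, hab, hab1, hab2, -⟩ := encard_ne_zero.1 hm'
        obtain rfl : a = b := hab1
        exact walkSum_loop (hs ξ) hξ x a hab2 hab
      · rw [indicator_of_notMem hm, add_zero]
        exact walkSum_noloop_le (hs ξ) hξ x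
    rw [lintegral_add_right _ (measurable_one.indicator hM), lintegral_walkSum hR hprob hZ0 hZt,
      lintegral_walkSum hR hprob hZ0 hZt, lintegral_indicator_one hM] at hle
    have h0 : ℙ M = 0 := by
      by_contra hne
      exact absurd hle (not_le.2 (ENNReal.lt_add_right hZt hne))
    have h0' : ∀ᵐ ξ ∂ℙ, ξ ∉ M := measure_eq_zero_iff_ae_notMem.1 h0
    filter_upwards [h0'] with ξ hξ y hy hl
    apply hξ
    change ((G ξ).1 ∩ S).encard ≠ 0
    exact encard_ne_zero.2 ⟨(y, y), hl, rfl, hy, trivial⟩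
  have h2 : ∀ᵐ ξ ∂ℙ, ∀ n : ℕ, ∀ y ∈ closedBall (TopologicalSpace.denseSeq X n) 1,
      (y, y) ∉ (G ξ).1 := ae_all_iff.2 fun n => h1 _
  filter_upwards [h2] with ξ hξ x
  obtain ⟨n, hn⟩ : ∃ n, x ∈ closedBall (TopologicalSpace.denseSeq X n) 1 := by
    obtain ⟨n, hn⟩ := (TopologicalSpace.denseRange_denseSeq X).exists_dist_lt x one_pos
    exact ⟨n, mem_closedBall.2 hn.le⟩
  exact hξ n x hn

/-- Equivariance of the family `Phat`. -/
theorem Phat_equivariant (hR : HasFdd ℙ G Z Phat)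
    (hprob : ∀ x, IsProbabilityMeasure (Phat x)) (γ : X ≃ᵢ X) (α : Ξ → Ξ)
    (hα : MeasurePreserving α ℙ ℙ)
    (hαG : ∀ ξ, (G (α ξ)).1 = (fun q : X × X => (γ q.1, γ q.2)) '' (G ξ).1) (x : X) :
    Phat (γ x) = (Phat x).map (fun p : (ℤ → X) × Ξ => (fun n => γ (p.1 n), α p.2)) := by
  have hγ : Measurable γ := γ.continuous.measurable
  have hm : Measurable (fun p : (ℤ → X) × Ξ => ((fun n => γ (p.1 n), α p.2) : (ℤ → X) × Ξ)) := by
    refine Measurable.prodMk (measurable_pi_lambda _ fun n => ?_) (hα.measurable.comp measurable_snd)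
    exact hγ.comp ((measurable_pi_apply n).comp measurable_fst)
  have := hprob x
  have := hprob (γ x)
  have : IsProbabilityMeasure
      ((Phat x).map (fun p : (ℤ → X) × Ξ => ((fun n => γ (p.1 n), α p.2) : (ℤ → X) × Ξ))) :=
    Measure.isProbabilityMeasure_map hm.aemeasurable
  refine measure_ext_rect_le _ _ fun k B A hB hA => ?_
  rw [Measure.map_apply hm (rect_measurable hB.1 hA)]
  have hpre : (fun p : (ℤ → X) × Ξ => ((fun n => γ (p.1 n), α p.2) : (ℤ → X) × Ξ)) ⁻¹' rect B A =
      rect (fun i => γ ⁻¹' B i) (α ⁻¹' A) := rfl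
  have hB' : Supp k (fun i => γ ⁻¹' B i) :=
    ⟨fun i => hγ (hB.1 i), fun i hi => by simp [hB.2 i hi]⟩
  rw [hpre, hR x k _ _ hB' (hα.measurable hA), hR (γ x) k B A hB hA]
  gcongr Z⁻¹ * ?_
  have h1 : ∀ ξ, walkSum (G ξ) x k (fun i => γ ⁻¹' B i) = walkSum (G (α ξ)) (γ x) k B :=
    fun ξ => (walkSum_equiv (hαG ξ) x k B).symm
  simp only [h1]
  have h2 : ℙ.restrict A = (ℙ.restrict (α ⁻¹' A)).map α :=
    ((hα.restrict_preimage hA).map_eq).symm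
  rw [h2]
  exact lintegral_map_le (fun ξ => walkSum (G ξ) (γ x) k B) α

/-- The time shift. -/
def tshift (p : (ℤ → X) × Ξ) : (ℤ → X) × Ξ := (fun n => p.1 (n + 1), p.2)

theorem measurable_tshift : Measurable (tshift : (ℤ → X) × Ξ → (ℤ → X) × Ξ) := by
  refine Measurable.prodMk (measurable_pi_lambda _ fun n => ?_) measurable_snd
  exact (measurable_pi_apply (n + 1)).comp measurable_fst

theorem measurableSet_coord (i : ℤ) {S : Set X} (hS : MeasurableSet S) :
    MeasurableSet {p : (ℤ → X) × Ξ | p.1 i ∈ S} :=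
  ((measurable_pi_apply i).comp measurable_fst) hS

/-- The local shift identity. -/
theorem Phat_shift [Nonempty X] (hG : Measurable G)
    (hs : ∀ ξ (x y : X), (x, y) ∈ (G ξ).1 ↔ (y, x) ∈ (G ξ).1) (hR : HasFdd ℙ G Z Phat)
    (hprob : ∀ x, IsProbabilityMeasure (Phat x)) (hZ0 : Z ≠ 0) (hZt : Z ≠ ⊤) (a b : X) :
    ((Phat a).restrict {p | p.1 1 ∈ closedBall b 1}).map tshift =
      (Phat b).restrict {p | p.1 (-1) ∈ closedBall a 1} := by
  have := hprob a
  have := hprob b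
  refine measure_ext_rect _ _ fun k B A hB hA => ?_
  have hRm := rect_measurable hB.1 hA
  rw [Measure.map_apply measurable_tshift hRm, Measure.restrict_apply (measurable_tshift hRm),
    Measure.restrict_apply hRm]
  set BL : ℤ → Set X := fun i => {y | y ∈ B (i - 1) ∧ (i = 1 → y ∈ closedBall b 1)} with hBL
  set BR : ℤ → Set X := fun i => {y | y ∈ B i ∧ (i = -1 → y ∈ closedBall a 1)} with hBR
  have hmeas : ∀ (P : Prop) (c : X), MeasurableSet {y : X | P → y ∈ closedBall c 1} := by
    intro P c
    by_cases hP : P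
    · simp only [hP, true_imp_iff]
      exact measurableSet_closedBall
    · simp [hP]
  have hL : tshift ⁻¹' rect B A ∩ {p : (ℤ → X) × Ξ | p.1 1 ∈ closedBall b 1} = rect BL A := by
    ext p
    constructor
    · rintro ⟨⟨h1, h2⟩, h3⟩
      refine ⟨fun i => ⟨?_, ?_⟩, h2⟩
      · have := h1 (i - 1)
        simpa [tshift] using this
      · rintro rfl
        exact h3
    · rintro ⟨h1, h2⟩
      refine ⟨⟨fun i => ?_, h2⟩, (h1 1).2 rfl⟩
      have := (h1 (i + 1)).1
      simpa [tshift] using this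
  have hRr : rect B A ∩ {p : (ℤ → X) × Ξ | p.1 (-1) ∈ closedBall a 1} = rect BR A := by
    ext p
    constructor
    · rintro ⟨⟨h1, h2⟩, h3⟩
      refine ⟨fun i => ⟨h1 i, ?_⟩, h2⟩
      rintro rfl
      exact h3
    · rintro ⟨h1, h2⟩
      exact ⟨⟨fun i => (h1 i).1, h2⟩, (h1 (-1)).2 rfl⟩
  have hout : ∀ i : ℤ, (i < -(k : ℤ) ∨ (k : ℤ) < i) → B i = univ := fun i hi =>
    hB.2 i (by omega)
  have hBLs : Supp (k + 1) BL := by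
    refine ⟨fun i => (hB.1 (i - 1)).inter (hmeas _ _), fun i hi => ?_⟩
    push_cast at hi
    have h1 := hout (i - 1) (by omega)
    have h2 : i ≠ 1 := by omega
    simp [hBL, h1, h2]
  have hBRs : Supp (k + 1) BR := by
    refine ⟨fun i => (hB.1 i).inter (hmeas _ _), fun i hi => ?_⟩
    push_cast at hi
    have h1 := hout i (by omega)
    have h2 : i ≠ -1 := by omega
    simp [hBR, h1, h2]
  rw [hL, hRr, hR a (k + 1) BL A hBLs hA, hR b (k + 1) BR A hBRs hA]
  congr 1
  refine lintegral_congr_ae (ae_restrict_of_ae ?_)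
  filter_upwards [ae_finite_degree hG hR hprob hZ0 hZt, ae_no_loop hG hs hR hprob hZ0 hZt]
    with ξ hf hl
  rw [walkSum_eq_pathSum (hs ξ) hf, walkSum_eq_pathSum (hs ξ) hf]
  refine pathSum_shift (hs ξ) hf hl (2 * k + 1) _ _ ?_ ?_ ?_
  · have h1 := hout (((0 : ℕ) : ℤ) - ((k + 1 : ℕ) : ℤ) - 1) (by push_cast; omega)
    have h2 : ((0 : ℕ) : ℤ) - ((k + 1 : ℕ) : ℤ) ≠ 1 := by push_cast; omega
    have h3 : 0 ≠ k + 1 := by omega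
    simp only [cst, hBL, h1]
    ext y
    simp only [mem_ofPred_eq, mem_univ, true_and, iff_true]
    exact ⟨fun h => absurd h h2, fun h => absurd h h3⟩
  · have h1 := hout (((2 * k + 1 + 1 : ℕ) : ℤ) - ((k + 1 : ℕ) : ℤ)) (by push_cast; omega)
    have h2 : ((2 * k + 1 + 1 : ℕ) : ℤ) - ((k + 1 : ℕ) : ℤ) ≠ -1 := by push_cast; omega
    have h3 : 2 * k + 1 + 1 ≠ k + 1 := by omega
    simp only [cst, hBR, h1]
    ext y
    simp only [mem_ofPred_eq, mem_univ, true_and, iff_true]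
    exact ⟨fun h => absurd h h2, fun h => absurd h h3⟩
  · intro j hj
    have e : ((j + 1 : ℕ) : ℤ) - ((k + 1 : ℕ) : ℤ) - 1 = (j : ℤ) - ((k + 1 : ℕ) : ℤ) := by
      push_cast; ring
    have e1 : (((j + 1 : ℕ) : ℤ) - ((k + 1 : ℕ) : ℤ) = 1) ↔ j = k + 1 := by push_cast; omega
    have e2 : ((j : ℤ) - ((k + 1 : ℕ) : ℤ) = -1) ↔ j + 1 = k + 1 := by push_cast; omega
    ext y
    simp only [cst, hBL, hBR, mem_ofPred_eq, e, e1, e2]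
    tauto

/-- Averaging over the isometry group. -/
theorem haar_average {m : MeasurableSpace (X ≃ᵢ X)} (L : Measure (X ≃ᵢ X)) [SigmaFinite L] (o : X)
    (ho : Measurable fun g : X ≃ᵢ X => g o) (v : ℝ≥0∞)
    (hv : ∀ y : X, L {g | dist y (g o) ≤ 1} = v)
    (Q : Measure ((ℤ → X) × Ξ)) [IsFiniteMeasure Q] {A : Set ((ℤ → X) × Ξ)}
    (hA : MeasurableSet A) (i : ℤ) :
    Measurable (fun g : X ≃ᵢ X => Q (A ∩ {p | p.1 i ∈ closedBall (g o) 1})) ∧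
    ∫⁻ g, Q (A ∩ {p | p.1 i ∈ closedBall (g o) 1}) ∂L = v * Q A := by
  set S : Set ((X ≃ᵢ X) × ((ℤ → X) × Ξ)) :=
    {q | q.2 ∈ A} ∩ {q | dist (q.2.1 i) (q.1 o) ≤ 1} with hS
  have hSm : MeasurableSet S := by
    refine (measurable_snd hA).inter (measurableSet_le ?_ measurable_const)
    exact ((measurable_pi_apply i).comp (measurable_fst.comp measurable_snd)).dist
      (ho.comp measurable_fst)
  have h1 : ∀ g : X ≃ᵢ X, Q (A ∩ {p | p.1 i ∈ closedBall (g o) 1}) = Q (Prod.mk g ⁻¹' S) :=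
    fun g => rfl
  refine ⟨?_, ?_⟩
  · simp only [h1]
    exact measurable_measure_prodMk_left hSm
  simp only [h1]
  rw [← Measure.prod_apply hSm, Measure.prod_apply_symm hSm]
  have h2 : ∀ p : (ℤ → X) × Ξ, L ((fun g => (g, p)) ⁻¹' S) = indicator A (fun _ => v) p := by
    intro p
    by_cases hp : p ∈ A
    · rw [indicator_of_mem hp, ← hv (p.1 i)]
      congr 1
      ext g
      simp [hS, hp]
    · rw [indicator_of_notMem hp]
      have : (fun g : X ≃ᵢ X => (g, p)) ⁻¹' S = ∅ := by
        ext g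
        simp [hS, hp]
      rw [this, measure_empty]
  simp only [h2]
  rw [lintegral_indicator hA, lintegral_const, Measure.restrict_apply_univ]

end Model

open scoped Classical in
/-- **Proposition 14 (stationarity of the environment seen from the walker).**
Let `G` be an isometry-equivariant random graph over the probability space `(Ξ, ℙ)` with
`Z < ∞`, and for `x ∈ X` let `P̂_x` be the joint law of the environment and the doubly
infinite lazy simple random walk `w` on `G` started from a biased vertex near `x`, i.e.
the measure on `X^ℤ × Ξ` whose finite dimensional distributions are given by `hPhat`.
Then `P̂_0` is invariant under the time shift `s(w, ξ) = (w(·+1), ξ)` on every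
isometry invariant set `A`. -/
theorem environment_viewed_by_walker_stationary
    {X : Type*} [MetricSpace X] [ProperSpace X] [CompleteSpace X] [SimplyConnectedSpace X]
    [NoncompactSpace X] [MeasurableSpace X] [BorelSpace X] [Nonempty X]
    (hsym : PointSymmetric X)
    (μ : Measure X)
    (hμiso : ∀ γ : X ≃ᵢ X, Measure.map γ μ = μ)
    (hμball : ∀ (x : X) (r : ℝ), 0 < r → 0 < μ (closedBall x r) ∧ μ (closedBall x r) < ⊤)
    (o : X)
    {Ξ : Type*} [MeasurableSpace Ξ] (ℙ : Measure Ξ) [IsProbabilityMeasure ℙ]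
    (G : Ξ → Config (X × X)) (hGmeas : Measurable G)
    (hGsym : ∀ ξ (x y : X), (x, y) ∈ (G ξ).1 ↔ (y, x) ∈ (G ξ).1)
    -- the isometries of `X` act on `Ξ` preserving `ℙ`, compatibly with `G`:
    (act : (X ≃ᵢ X) → Ξ → Ξ)
    (hact : ∀ γ, MeasurePreserving (act γ) ℙ ℙ)
    (hactG : ∀ γ ξ, (G (act γ ξ)).1 = (fun q : X × X => (γ q.1, γ q.2)) '' (G ξ).1)
    (hZpos : 0 < walkNorm ℙ G o) (hZfin : walkNorm ℙ G o < ⊤)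
    (Phat : X → Measure ((ℤ → X) × Ξ))
    (hPhatProb : ∀ x, IsProbabilityMeasure (Phat x))
    (hPhat : ∀ (x : X) (A : Set Ξ), MeasurableSet A → ∀ (k : ℕ) (B : ℤ → Set X),
      (∀ i, MeasurableSet (B i)) →
      Phat x {p : (ℤ → X) × Ξ |
          (∀ i : ℤ, -(k : ℤ) ≤ i → i ≤ (k : ℤ) → p.1 i ∈ B i) ∧ p.2 ∈ A} =
        (walkNorm ℙ G o)⁻¹ *
          ∫⁻ ξ in A, ∑' f : Fin (2 * k + 1) → X,
            (if (∀ j : Fin (2 * k + 1), f j ∈ gVertices (G ξ) ∧ f j ∈ B ((j : ℤ) - k)) ∧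
                f ⟨k, by omega⟩ ∈ closedBall x 1
             then walkWeight (G ξ) k f else 0) ∂ℙ) :
    ∀ A : Set ((ℤ → X) × Ξ), MeasurableSet A →
      (∀ γ : X ≃ᵢ X, (fun p : (ℤ → X) × Ξ => (fun n => γ (p.1 n), act γ p.2)) ⁻¹' A = A) →
      Phat o ((fun p : (ℤ → X) × Ξ => (fun n => p.1 (n + 1), p.2)) '' A) = Phat o A := by
  intro A hA hinvA
  have hR : HasFdd ℙ G (walkNorm ℙ G o) Phat := by
    intro x k B A hB hA
    rw [show Phat x (rect B A) = Phat x {p : (ℤ → X) × Ξ |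
          (∀ i : ℤ, -(k : ℤ) ≤ i → i ≤ (k : ℤ) → p.1 i ∈ B i) ∧ p.2 ∈ A} from ?_]
    · exact hPhat x A hA k B hB.1
    · congr 1
      ext p
      constructor
      · rintro ⟨h1, h2⟩
        exact ⟨fun i _ _ => h1 i, h2⟩
      · rintro ⟨h1, h2⟩
        refine ⟨fun i => ?_, h2⟩
        by_cases hi : -(k : ℤ) ≤ i ∧ i ≤ (k : ℤ)
        · exact h1 i hi.1 hi.2
        · rw [hB.2 i hi]
          trivial
  have : PathConnectedSpace X := inferInstance
  have : PreconnectedSpace X := inferInstance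
  have hZ0 : walkNorm ℙ G o ≠ 0 := hZpos.ne'
  have hZt : walkNorm ℙ G o ≠ ⊤ := hZfin.ne
  obtain ⟨m, L, hσ, ho, hinv, v, hv0, hvt, hv⟩ := exists_iso_haar hsym o
  have := hPhatProb o
  set SA : Set ((ℤ → X) × Ξ) :=
    (fun p : (ℤ → X) × Ξ => ((fun n => p.1 (n - 1), p.2) : (ℤ → X) × Ξ)) ⁻¹' A with hSA
  have himg : (fun p : (ℤ → X) × Ξ => ((fun n => p.1 (n + 1), p.2) : (ℤ → X) × Ξ)) '' A = SA := by
    ext p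
    constructor
    · rintro ⟨q, hq, rfl⟩
      simpa [hSA] using hq
    · intro hp
      exact ⟨_, hp, by simp⟩
  have hSAm : MeasurableSet SA := by
    have hm : Measurable
        (fun p : (ℤ → X) × Ξ => ((fun n => p.1 (n - 1), p.2) : (ℤ → X) × Ξ)) := by
      refine Measurable.prodMk (measurable_pi_lambda _ fun n => ?_) measurable_snd
      exact (measurable_pi_apply (n - 1)).comp measurable_fst
    exact hm hA
  have hpre : tshift ⁻¹' SA = A := by
    ext p
    simp [hSA, tshift]
  have hC3 : ∀ a b : X, Phat a (A ∩ {p | p.1 1 ∈ closedBall b 1}) =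
      Phat b (SA ∩ {p | p.1 (-1) ∈ closedBall a 1}) := by
    intro a b
    have h := DFunLike.congr_fun (Phat_shift hGmeas hGsym hR hPhatProb hZ0 hZt a b) SA
    rwa [Measure.map_apply measurable_tshift hSAm,
      Measure.restrict_apply (measurable_tshift hSAm), Measure.restrict_apply hSAm, hpre] at h
  have hC2 : ∀ g : X ≃ᵢ X, Phat o (A ∩ {p | p.1 1 ∈ closedBall (g o) 1}) =
      Phat (g⁻¹ o) (A ∩ {p | p.1 1 ∈ closedBall o 1}) := by
    intro g
    have h := Phat_equivariant hR hPhatProb g (act g) (hact g) (hactG g) (g⁻¹ o)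
    have hg : g (g⁻¹ o) = o := g.apply_symm_apply o
    rw [hg] at h
    have hm : Measurable
        (fun p : (ℤ → X) × Ξ => ((fun n => g (p.1 n), act g p.2) : (ℤ → X) × Ξ)) := by
      refine Measurable.prodMk (measurable_pi_lambda _ fun n => ?_)
        ((hact g).measurable.comp measurable_snd)
      exact g.continuous.measurable.comp ((measurable_pi_apply n).comp measurable_fst)
    rw [h, Measure.map_apply hm (hA.inter (measurableSet_coord 1 measurableSet_closedBall)),
      preimage_inter, hinvA g]
    congr 1
    ext p
    refine and_congr_right fun _ => ?_
    change g (p.1 1) ∈ closedBall (g o) 1 ↔ p.1 1 ∈ closedBall o 1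
    rw [mem_closedBall, mem_closedBall, g.dist_eq]
  set H : (X ≃ᵢ X) → ℝ≥0∞ := fun g => Phat o (SA ∩ {p | p.1 (-1) ∈ closedBall (g o) 1}) with hH
  obtain ⟨-, hav1⟩ := haar_average L o ho v hv (Phat o) hA 1
  obtain ⟨hHm, hav2⟩ := haar_average L o ho v hv (Phat o) hSAm (-1)
  have hkey : v * Phat o A = v * Phat o SA := by
    rw [← hav1, ← hav2, ← hinv.lintegral_comp hHm]
    refine lintegral_congr fun g => ?_
    rw [hC2, hC3]
  rw [himg]
  exact ((ENNReal.mul_right_inj hv0 hvt).1 hkey).symm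

end BooleanModel
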